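/- arXiv:2011.15071 — 2 statements merged into one kernel-verified Lean document; each statement's English description precedes it below -/
import Mathlib

section
/- Let (X, μ) be a finite measure space and u, v ∈ L¹(X, μ) with ∫_X u dμ = ∫_X v dμ. Suppose that for every real t with 0 ≤ t ≤ μ(X), ∫₀ᵗ u*(s) ds ≤ ∫₀ᵗ v*(s) ds, where u*, v* are the decreasing rearrangements of u and v. Then for every convex function φ : ℝ → ℝ such that φ∘u and φ∘v are integrable, ∫_X φ(u) dμ ≤ ∫_X φ(v) dμ. -/
open MeasureTheory Set

noncomputable section

/-- Decreasing rearrangement of `f` with respect to the measure `μ`: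
`f*(s) = inf {c : μ {f > c} ≤ s}`. -/
def decRearr {X : Type*} [MeasurableSpace X] (μ : Measure X) (f : X → ℝ) (s : ℝ) : ℝ :=
  sInf {c : ℝ | μ {x | c < f x} ≤ ENNReal.ofReal s}

/-- A measure is nonatomic if every set of positive measure has a measurable subset of
strictly smaller positive measure. -/
def IsNonatomic {X : Type*} [MeasurableSpace X] (μ : Measure X) : Prop :=
  ∀ s : Set X, MeasurableSet s → μ s ≠ 0 →
    ∃ t, t ⊆ s ∧ MeasurableSet t ∧ 0 < μ t ∧ μ t < μ s

/-!
Every convex `φ` is an affine function plus a superposition of the hinges `x ↦ (x - c)⁺` and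
`x ↦ (x - c)⁻`, weighted by the Stieltjes measure of its right derivative. Equality of the means
takes care of the affine part and makes the two kinds of hinge equivalent, so it is enough to treat
`φ x = (x - c)⁺`. For these,
`∫ (f - c)⁺ dμ = max_{0 ≤ t ≤ μ(X)} (∫₀ᵗ f* - c t)`,
the maximum being attained at `t = μ {f > c}`, and the right-hand side is monotone in the partial
integrals of `f*`.
-/

section Hinge

/-- The convex piecewise affine function with a unit kink at `c`, normalized so that its value and
its right derivative vanish at the base point `a`. -/
def hinge (a c x : ℝ) : ℝ := if a < c then (x - c)⁺ else (x - c)⁻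

lemma measurable_hinge (a : ℝ) : Measurable fun p : ℝ × ℝ => hinge a p.1 p.2 := by
  unfold hinge
  simp only [posPart_def, negPart_def]
  exact Measurable.ite (measurableSet_lt measurable_const measurable_fst) (by fun_prop)
    (by fun_prop)

lemma ofReal_posPart (y : ℝ) : ENNReal.ofReal y⁺ = ENNReal.ofReal y := by
  simp [posPart_def, ENNReal.ofReal_max]

lemma volume_setOf_mem_uIoc (a c x : ℝ) :
    volume {t | t ∈ uIoc a x ∧ c ∈ uIoc a t} = ENNReal.ofReal (hinge a c x) := by
  unfold hinge
  split_ifs with hac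
  · have hset : {t | t ∈ uIoc a x ∧ c ∈ uIoc a t} = Icc c x := by
      ext t
      simp only [mem_ofPred_eq, mem_uIoc, mem_Icc]
      grind
    rw [hset, Real.volume_Icc, ofReal_posPart]
  · have hset : {t | t ∈ uIoc a x ∧ c ∈ uIoc a t} = Ioo x c := by
      ext t
      simp only [mem_ofPred_eq, mem_uIoc, mem_Ioo]
      grind
    rw [hset, Real.volume_Ioo, ← posPart_neg, neg_sub, ofReal_posPart]

end Hinge

section Stieltjes

variable (G : StieltjesFunction ℝ) (a x : ℝ)

lemma measure_uIoc_stieltjes : G.measure (uIoc a x) = ‖G x - G a‖ₑ := by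
  rw [Real.enorm_eq_ofReal_abs]
  rcases le_total a x with hax | hxa
  · rw [uIoc_of_le hax, G.measure_Ioc, abs_of_nonneg (sub_nonneg.2 (G.mono hax))]
  · rw [uIoc_of_ge hxa, G.measure_Ioc, abs_of_nonpos (sub_nonpos.2 (G.mono hxa)), neg_sub]

lemma intervalIntegral_stieltjes_sub_eq_setIntegral_norm :
    ∫ t in a..x, (G t - G a) = ∫ t in uIoc a x, ‖G t - G a‖ := by
  rcases le_total a x with hax | hxa
  · rw [intervalIntegral.integral_of_le hax, uIoc_of_le hax]
    exact setIntegral_congr_fun measurableSet_Ioc fun t ht =>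
      (Real.norm_of_nonneg (sub_nonneg.2 (G.mono ht.1.le))).symm
  · rw [intervalIntegral.integral_of_ge hxa, uIoc_of_ge hxa, ← integral_neg]
    exact setIntegral_congr_fun measurableSet_Ioc fun t ht =>
      (Real.norm_of_nonpos (sub_nonpos.2 (G.mono ht.2))).symm

lemma intervalIntegral_stieltjes_sub_nonneg : 0 ≤ ∫ t in a..x, (G t - G a) := by
  rw [intervalIntegral_stieltjes_sub_eq_setIntegral_norm]
  exact integral_nonneg fun t => norm_nonneg _

lemma lintegral_hinge_stieltjes :
    ∫⁻ c, ENNReal.ofReal (hinge a c x) ∂G.measure =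
      ENNReal.ofReal (∫ t in a..x, (G t - G a)) := by
  have hint : IntegrableOn (fun t => G t - G a) (uIoc a x) :=
    intervalIntegrable_iff.1 (G.mono.intervalIntegrable.sub intervalIntegrable_const)
  have hmeas : MeasurableSet {p : ℝ × ℝ | p.2 ∈ uIoc a x ∧ p.1 ∈ uIoc a p.2} := by
    simp only [mem_uIoc]
    measurability
  calc ∫⁻ c, ENNReal.ofReal (hinge a c x) ∂G.measure
      = ∫⁻ c, volume {t | t ∈ uIoc a x ∧ c ∈ uIoc a t} ∂G.measure := by
        simp only [volume_setOf_mem_uIoc]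
    _ = (G.measure.prod volume) {p : ℝ × ℝ | p.2 ∈ uIoc a x ∧ p.1 ∈ uIoc a p.2} :=
        (Measure.prod_apply hmeas).symm
    _ = ∫⁻ t, G.measure {c | t ∈ uIoc a x ∧ c ∈ uIoc a t} := Measure.prod_apply_symm hmeas
    _ = ∫⁻ t in uIoc a x, ‖G t - G a‖ₑ := by
        rw [← lintegral_indicator measurableSet_uIoc]
        refine lintegral_congr fun t => ?_
        by_cases ht : t ∈ uIoc a x <;> simp [ht, ← measure_uIoc_stieltjes]
    _ = ENNReal.ofReal (∫ t in a..x, (G t - G a)) := by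
        rw [intervalIntegral_stieltjes_sub_eq_setIntegral_norm,
          ofReal_integral_norm_eq_lintegral_enorm hint]

lemma exists_stieltjesFunction_integral_eq_sub {φ : ℝ → ℝ} (hφ : ConvexOn ℝ univ φ) :
    ∃ G : StieltjesFunction ℝ, ∀ a x, ∫ t in a..x, G t = φ x - φ a := by
  have hmono : Monotone fun x => derivWithin φ (Ioi x) x := by
    simpa only [interior_univ, monotoneOn_univ] using hφ.monotoneOn_rightDeriv
  refine ⟨hmono.stieltjesFunction, fun a x => ?_⟩
  calc ∫ t in a..x, hmono.stieltjesFunction t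
      = ∫ t in a..x, derivWithin φ (Ioi t) t := by
        refine intervalIntegral.integral_congr_ae ?_
        filter_upwards [hmono.countable_not_continuousAt.ae_notMem volume] with t ht _
        exact (not_not.1 ht).continuousWithinAt.rightLim_eq
    _ = φ x - φ a :=
        intervalIntegral.integral_eq_sub_of_hasDeriv_right
          ((hφ.continuousOn isOpen_univ).mono (subset_univ _))
          (fun y _ => hφ.hasDerivWithinAt_rightDeriv_of_mem_interior (by simp))
          hmono.intervalIntegrable

end Stieltjes

section ConvexOrder

variable {X Y : Type*} [MeasurableSpace X] [MeasurableSpace Y] {μ : Measure X} {ν : Measure Y}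

lemma lintegral_stieltjes_remainder_eq_lintegral_hinge [SFinite μ] {f : X → ℝ}
    (hf : AEMeasurable f μ) (G : StieltjesFunction ℝ) (a : ℝ) :
    ∫⁻ x, ENNReal.ofReal (∫ t in a..f x, (G t - G a)) ∂μ =
      ∫⁻ c, ∫⁻ x, ENNReal.ofReal (hinge a c (f x)) ∂μ ∂G.measure := by
  simp only [← lintegral_hinge_stieltjes]
  refine lintegral_lintegral_swap ?_
  exact (measurable_hinge a).ennreal_ofReal.comp_aemeasurable
    (measurable_snd.aemeasurable.prodMk hf.comp_fst)

lemma integrable_and_integral_le_of_lintegral_ofReal_le {f : X → ℝ} {g : Y → ℝ}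
    (hf : AEStronglyMeasurable f μ) (hg : Integrable g ν) (hf₀ : 0 ≤ f) (hg₀ : 0 ≤ g)
    (hle : ∫⁻ x, ENNReal.ofReal (f x) ∂μ ≤ ∫⁻ y, ENNReal.ofReal (g y) ∂ν) :
    Integrable f μ ∧ ∫ x, f x ∂μ ≤ ∫ y, g y ∂ν := by
  have hg_top := (lintegral_ofReal_ne_top_iff_integrable hg.1 (.of_forall hg₀)).2 hg
  have hf_int : Integrable f μ :=
    (lintegral_ofReal_ne_top_iff_integrable hf (.of_forall hf₀)).1 (ne_top_of_le_ne_top hg_top hle)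
  refine ⟨hf_int, (ENNReal.ofReal_le_ofReal_iff (integral_nonneg hg₀)).1 ?_⟩
  rwa [ofReal_integral_eq_lintegral_ofReal hf_int (.of_forall hf₀),
    ofReal_integral_eq_lintegral_ofReal hg (.of_forall hg₀)]

variable [IsFiniteMeasure μ] [IsFiniteMeasure ν] {u : X → ℝ} {v : Y → ℝ}

lemma integrable_posPart_sub_const {f : X → ℝ} (hf : Integrable f μ) (c : ℝ) :
    Integrable (fun x => (f x - c)⁺) μ :=
  (hf.sub (integrable_const c)).pos_part

lemma integrable_negPart_sub_const {f : X → ℝ} (hf : Integrable f μ) (c : ℝ) :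
    Integrable (fun x => (f x - c)⁻) μ :=
  (hf.sub (integrable_const c)).neg_part

lemma integral_negPart_sub_const {f : X → ℝ} (hf : Integrable f μ) (c : ℝ) :
    ∫ x, (f x - c)⁻ ∂μ = ∫ x, (f x - c)⁺ ∂μ - (∫ x, f x ∂μ - μ.real univ * c) := by
  have hsub : Integrable (fun x => f x - c) μ := hf.sub (integrable_const c)
  have hneg (y : ℝ) : y⁻ = y⁺ - y := by linarith [posPart_sub_negPart y]
  simp only [hneg]
  rw [integral_sub (integrable_posPart_sub_const hf c) hsub,
    integral_sub hf (integrable_const c), integral_const, smul_eq_mul]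

lemma lintegral_hinge_le_of_integral_posPart_sub_le (hu : Integrable u μ) (hv : Integrable v ν)
    (hmass : μ univ = ν univ) (hmean : ∫ x, u x ∂μ = ∫ y, v y ∂ν)
    (hpos : ∀ c, ∫ x, (u x - c)⁺ ∂μ ≤ ∫ y, (v y - c)⁺ ∂ν) (a c : ℝ) :
    ∫⁻ x, ENNReal.ofReal (hinge a c (u x)) ∂μ ≤ ∫⁻ y, ENNReal.ofReal (hinge a c (v y)) ∂ν := by
  unfold hinge
  split_ifs
  · rw [← ofReal_integral_eq_lintegral_ofReal (integrable_posPart_sub_const hu c)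
        (.of_forall fun _ => posPart_nonneg _),
      ← ofReal_integral_eq_lintegral_ofReal (integrable_posPart_sub_const hv c)
        (.of_forall fun _ => posPart_nonneg _)]
    exact ENNReal.ofReal_le_ofReal (hpos c)
  · rw [← ofReal_integral_eq_lintegral_ofReal (integrable_negPart_sub_const hu c)
        (.of_forall fun _ => negPart_nonneg _),
      ← ofReal_integral_eq_lintegral_ofReal (integrable_negPart_sub_const hv c)
        (.of_forall fun _ => negPart_nonneg _),
      integral_negPart_sub_const hu, integral_negPart_sub_const hv, hmean, measureReal_def, hmass,
      ← measureReal_def]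
    exact ENNReal.ofReal_le_ofReal (sub_le_sub_right (hpos c) _)

lemma integral_affine_comp {f : X → ℝ} (hf : Integrable f μ) (b m : ℝ) :
    ∫ x, (b + m * f x) ∂μ = μ.real univ * b + m * ∫ x, f x ∂μ := by
  rw [integral_add (integrable_const b) (hf.const_mul m), integral_const, integral_const_mul,
    smul_eq_mul]

theorem integral_convexOn_comp_le_of_integral_posPart_sub_le (hu : Integrable u μ)
    (hv : Integrable v ν) (hmass : μ univ = ν univ) (hmean : ∫ x, u x ∂μ = ∫ y, v y ∂ν)
    (hpos : ∀ c, ∫ x, (u x - c)⁺ ∂μ ≤ ∫ y, (v y - c)⁺ ∂ν)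
    {φ : ℝ → ℝ} (hφ : ConvexOn ℝ univ φ) (hφv : Integrable (fun y => φ (v y)) ν) :
    Integrable (fun x => φ (u x)) μ ∧ ∫ x, φ (u x) ∂μ ≤ ∫ y, φ (v y) ∂ν := by
  obtain ⟨G, hG⟩ := exists_stieltjesFunction_integral_eq_sub hφ
  have hremainder (x : ℝ) :
      ∫ t in (0 : ℝ)..x, (G t - G 0) = φ x - (φ 0 + G 0 * x) := by
    rw [intervalIntegral.integral_sub G.mono.intervalIntegrable intervalIntegrable_const, hG,
      intervalIntegral.integral_const, smul_eq_mul]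
    ring
  have hremainder_nonneg (x : ℝ) : 0 ≤ φ x - (φ 0 + G 0 * x) :=
    hremainder x ▸ intervalIntegral_stieltjes_sub_nonneg G 0 x
  have hle : ∫⁻ x, ENNReal.ofReal (φ (u x) - (φ 0 + G 0 * u x)) ∂μ ≤
      ∫⁻ y, ENNReal.ofReal (φ (v y) - (φ 0 + G 0 * v y)) ∂ν := by
    simp only [← hremainder]
    rw [lintegral_stieltjes_remainder_eq_lintegral_hinge hu.aemeasurable,
      lintegral_stieltjes_remainder_eq_lintegral_hinge hv.aemeasurable]
    exact lintegral_mono (lintegral_hinge_le_of_integral_posPart_sub_le hu hv hmass hmean hpos 0)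
  have hφ_cont : Continuous φ := continuousOn_univ.1 (hφ.continuousOn isOpen_univ)
  have hu_affine : Integrable (fun x => φ 0 + G 0 * u x) μ :=
    (integrable_const _).add (hu.const_mul _)
  have hv_affine : Integrable (fun y => φ 0 + G 0 * v y) ν :=
    (integrable_const _).add (hv.const_mul _)
  obtain ⟨hu_rem, hrem_le⟩ := integrable_and_integral_le_of_lintegral_ofReal_le
    ((hφ_cont.comp_aestronglyMeasurable hu.1).sub hu_affine.1) (hφv.sub hv_affine)
    (fun x => hremainder_nonneg (u x)) (fun y => hremainder_nonneg (v y)) hle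
  have hφu : Integrable (fun x => φ (u x)) μ := by simpa using hu_rem.add hu_affine
  refine ⟨hφu, ?_⟩
  simp only [Pi.sub_apply] at hrem_le
  rw [integral_sub hφu hu_affine, integral_sub hφv hv_affine, integral_affine_comp hu,
    integral_affine_comp hv, hmean, measureReal_def, hmass, ← measureReal_def] at hrem_le
  linarith

end ConvexOrder

section Rearrangement

variable {X : Type*} [MeasurableSpace X] {μ : Measure X} {f : X → ℝ}

lemma exists_measure_setOf_lt_lt [IsFiniteMeasure μ] (hf : AEMeasurable f μ) {ε : ENNReal}
    (hε : ε ≠ 0) : ∃ c, μ {x | c < f x} < ε := by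
  have hempty : ⋂ c : ℝ, {x | c < f x} = ∅ :=
    eq_empty_of_forall_notMem fun x hx => lt_irrefl (f x) (mem_iInter.1 hx (f x))
  have htendsto := tendsto_measure_iInter_atTop (μ := μ) (s := fun c : ℝ => {x | c < f x})
    (fun _ => nullMeasurableSet_lt aemeasurable_const hf) (fun _ _ hcd _ hx => hcd.trans_lt hx)
    ⟨0, measure_ne_top _ _⟩
  rw [hempty, measure_empty] at htendsto
  exact (htendsto.eventually_lt_const hε.bot_lt).exists

lemma exists_lt_measure_setOf_lt {ε : ENNReal} (hε : ε < μ univ) : ∃ c, ε < μ {x | c < f x} := by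
  have huniv : ⋃ c : ℝ, {x | c < f x} = univ :=
    eq_univ_of_forall fun x => mem_iUnion.2 (exists_lt (f x))
  have htendsto := tendsto_measure_iUnion_atBot (μ := μ) (s := fun c : ℝ => {x | c < f x})
    (fun _ _ hcd _ hx => hcd.trans_lt hx)
  rw [huniv] at htendsto
  exact (htendsto.eventually_const_lt hε).exists

lemma measure_setOf_lt_le_of_forall_gt {c : ℝ} {ε : ENNReal}
    (h : ∀ b, c < b → μ {x | b < f x} ≤ ε) : μ {x | c < f x} ≤ ε := by
  obtain ⟨b, hb_anti, hb_gt, hb_tendsto⟩ := exists_seq_strictAnti_tendsto c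
  have hunion : ⋃ n, {x | b n < f x} = {x | c < f x} := by
    ext x
    simp only [mem_iUnion, mem_ofPred_eq]
    exact ⟨fun ⟨n, hn⟩ => (hb_gt n).trans hn,
      fun hx => (hb_tendsto.eventually_lt_const hx).exists⟩
  have hmono : Monotone fun n => {x | b n < f x} :=
    fun _ _ hmn _ hx => (hb_anti.antitone hmn).trans_lt hx
  rw [← hunion, hmono.measure_iUnion]
  exact iSup_le fun n => h _ (hb_gt n)

variable [IsFiniteMeasure μ]

/-- At `s = 0` and for `s ≥ μ(X)` the infimum in `decRearr` may be over an empty or unbounded set,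
where `sInf` returns `0`. -/
lemma lt_decRearr_iff (hf : AEMeasurable f μ) {s : ℝ} (hs : s ∈ Ioo 0 (μ.real univ)) (c : ℝ) :
    c < decRearr μ f s ↔ s < μ.real {x | c < f x} := by
  have hne : {c : ℝ | μ {x | c < f x} ≤ ENNReal.ofReal s}.Nonempty :=
    (exists_measure_setOf_lt_lt hf (ENNReal.ofReal_pos.2 hs.1).ne').imp fun _ => le_of_lt
  have hbdd : BddBelow {c : ℝ | μ {x | c < f x} ≤ ENNReal.ofReal s} := by
    obtain ⟨b, hb⟩ := exists_lt_measure_setOf_lt (f := f)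
      ((ENNReal.ofReal_lt_iff_lt_toReal hs.1.le (measure_ne_top μ univ)).2 hs.2)
    refine ⟨b, fun a ha => le_of_not_gt fun hab => (hb.trans_le ?_).not_ge ha⟩
    exact measure_mono fun x hx => hab.trans hx
  have hle : decRearr μ f s ≤ c ↔ μ {x | c < f x} ≤ ENNReal.ofReal s := by
    refine ⟨fun h => measure_setOf_lt_le_of_forall_gt fun b hcb => ?_, fun h => csInf_le hbdd h⟩
    obtain ⟨a, ha, hab⟩ := exists_lt_of_csInf_lt hne (h.trans_lt hcb)
    exact (measure_mono fun x hx => hab.trans hx).trans ha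
  rw [← not_le, hle, ENNReal.le_ofReal_iff_toReal_le (measure_ne_top _ _) hs.1.le,
    ← measureReal_def, not_le]

lemma antitoneOn_decRearr (hf : AEMeasurable f μ) :
    AntitoneOn (decRearr μ f) (Ioo 0 (μ.real univ)) := by
  intro s hs t ht hst
  refine le_of_forall_lt fun c hc => ?_
  exact (lt_decRearr_iff hf hs c).2 (hst.trans_lt ((lt_decRearr_iff hf ht c).1 hc))

lemma decRearr_preimage_Ioi_inter (hf : AEMeasurable f μ) (c : ℝ) :
    decRearr μ f ⁻¹' Ioi c ∩ Ioo 0 (μ.real univ) = Ioo 0 (μ.real {x | c < f x}) := by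
  ext s
  refine ⟨fun ⟨hc, hs⟩ => ⟨hs.1, (lt_decRearr_iff hf hs c).1 hc⟩, fun hs => ?_⟩
  have hs' : s ∈ Ioo 0 (μ.real univ) := ⟨hs.1, hs.2.trans_le (measureReal_mono (subset_univ _))⟩
  exact ⟨(lt_decRearr_iff hf hs' c).2 hs.2, hs'⟩

lemma identDistrib_decRearr (hf : AEMeasurable f μ) :
    ProbabilityTheory.IdentDistrib (decRearr μ f) f
      (volume.restrict (Ioo 0 (μ.real univ))) μ := by
  have hmeas := aemeasurable_restrict_of_antitoneOn (μ := volume) measurableSet_Ioo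
    (antitoneOn_decRearr hf)
  refine ⟨hmeas, hf, ?_⟩
  refine ext_of_generate_finite _ (borel_eq_generateFrom_Ioi ℝ ▸ BorelSpace.measurable_eq)
    isPiSystem_Ioi ?_ ?_
  · rintro _ ⟨c, rfl⟩
    rw [Measure.map_apply_of_aemeasurable hmeas measurableSet_Ioi,
      Measure.map_apply_of_aemeasurable hf measurableSet_Ioi,
      Measure.restrict_apply' measurableSet_Ioo, decRearr_preimage_Ioi_inter hf, Real.volume_Ioo,
      sub_zero, ofReal_measureReal]
    rfl
  · rw [Measure.map_apply_of_aemeasurable hmeas .univ, Measure.map_apply_of_aemeasurable hf .univ,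
      preimage_univ, preimage_univ, Measure.restrict_apply_univ, Real.volume_Ioo, sub_zero,
      ofReal_measureReal]

lemma integrableOn_decRearr (hf : Integrable f μ) :
    IntegrableOn (decRearr μ f) (Ioo 0 (μ.real univ)) :=
  (identDistrib_decRearr hf.aemeasurable).integrable_iff.2 hf

lemma integral_posPart_sub_eq_setIntegral_decRearr (hf : AEMeasurable f μ) (c : ℝ) :
    ∫ x, (f x - c)⁺ ∂μ = ∫ s in Ioo 0 (μ.real univ), (decRearr μ f s - c)⁺ := by
  have hmeas : Measurable fun y : ℝ => (y - c)⁺ := by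
    simp only [posPart_def]
    fun_prop
  exact ((identDistrib_decRearr hf).comp hmeas).integral_eq.symm

lemma setIntegral_decRearr_sub_const (hf : Integrable f μ) (c : ℝ) {t : ℝ} (ht₀ : 0 ≤ t)
    (ht : t ≤ μ.real univ) :
    ∫ s in Ioo 0 t, (decRearr μ f s - c) = (∫ s in (0 : ℝ)..t, decRearr μ f s) - c * t := by
  have hint := (integrableOn_decRearr hf).mono_set (Ioo_subset_Ioo_right ht)
  rw [integral_sub hint (integrable_const c), intervalIntegral.integral_of_le ht₀,
    integral_Ioc_eq_integral_Ioo, setIntegral_const, Real.volume_real_Ioo_of_le ht₀, smul_eq_mul,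
    sub_zero, mul_comm]

lemma integral_decRearr_sub_le_integral_posPart_sub (hf : Integrable f μ) (c : ℝ) {t : ℝ}
    (ht₀ : 0 ≤ t) (ht : t ≤ μ.real univ) :
    (∫ s in (0 : ℝ)..t, decRearr μ f s) - c * t ≤ ∫ x, (f x - c)⁺ ∂μ := by
  have hsub : IntegrableOn (fun s => decRearr μ f s - c) (Ioo 0 (μ.real univ)) :=
    (integrableOn_decRearr hf).sub (integrable_const c)
  have hsubset : Ioo 0 t ⊆ Ioo 0 (μ.real univ) := Ioo_subset_Ioo_right ht
  rw [integral_posPart_sub_eq_setIntegral_decRearr hf.aemeasurable,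
    ← setIntegral_decRearr_sub_const hf c ht₀ ht]
  calc ∫ s in Ioo 0 t, (decRearr μ f s - c)
      ≤ ∫ s in Ioo 0 t, (decRearr μ f s - c)⁺ :=
        integral_mono (hsub.mono_set hsubset) (hsub.mono_set hsubset).pos_part
          fun s => le_posPart _
    _ ≤ ∫ s in Ioo 0 (μ.real univ), (decRearr μ f s - c)⁺ :=
        setIntegral_mono_set hsub.pos_part (.of_forall fun s => posPart_nonneg _)
          (.of_forall hsubset)

lemma integral_posPart_sub_eq_integral_decRearr_sub (hf : Integrable f μ) (c : ℝ) :
    ∫ x, (f x - c)⁺ ∂μ =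
      (∫ s in (0 : ℝ)..μ.real {x | c < f x}, decRearr μ f s) - c * μ.real {x | c < f x} := by
  have hindicator : EqOn (fun s => (decRearr μ f s - c)⁺)
      ((Iio (μ.real {x | c < f x})).indicator fun s => decRearr μ f s - c)
      (Ioo 0 (μ.real univ)) := by
    intro s hs
    by_cases hc : s < μ.real {x | c < f x}
    · have hgt := (lt_decRearr_iff hf.aemeasurable hs c).2 hc
      simp only [indicator_of_mem (mem_Iio.2 hc), posPart_of_nonneg (sub_nonneg.2 hgt.le)]
    · have hle := not_lt.1 (mt (lt_decRearr_iff hf.aemeasurable hs c).1 hc)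
      simp only [indicator_of_notMem (notMem_Iio.2 (not_lt.1 hc)),
        posPart_of_nonpos (sub_nonpos.2 hle)]
  have hlevel : μ.real {x | c < f x} ≤ μ.real univ := measureReal_mono (subset_univ _)
  rw [integral_posPart_sub_eq_setIntegral_decRearr hf.aemeasurable,
    setIntegral_congr_fun measurableSet_Ioo hindicator, setIntegral_indicator measurableSet_Iio,
    Ioo_inter_Iio, min_eq_right hlevel,
    setIntegral_decRearr_sub_const hf c measureReal_nonneg hlevel]

end Rearrangement

theorem integral_posPart_sub_le_of_integral_decRearr_le {X Y : Type*} [MeasurableSpace X]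
    [MeasurableSpace Y] {μ : Measure X} {ν : Measure Y} [IsFiniteMeasure μ] [IsFiniteMeasure ν]
    {u : X → ℝ} {v : Y → ℝ} (hu : Integrable u μ) (hv : Integrable v ν) (hmass : μ univ = ν univ)
    (hstar : ∀ t : ℝ, 0 ≤ t → t ≤ μ.real univ →
      (∫ s in (0 : ℝ)..t, decRearr μ u s) ≤ ∫ s in (0 : ℝ)..t, decRearr ν v s) (c : ℝ) :
    ∫ x, (u x - c)⁺ ∂μ ≤ ∫ y, (v y - c)⁺ ∂ν := by
  set t := μ.real {x | c < u x}
  have ht₀ : 0 ≤ t := measureReal_nonneg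
  have ht : t ≤ μ.real univ := measureReal_mono (subset_univ _)
  have ht' : t ≤ ν.real univ := by rwa [measureReal_def, ← hmass]
  calc ∫ x, (u x - c)⁺ ∂μ
      = (∫ s in (0 : ℝ)..t, decRearr μ u s) - c * t :=
        integral_posPart_sub_eq_integral_decRearr_sub hu c
    _ ≤ (∫ s in (0 : ℝ)..t, decRearr ν v s) - c * t := sub_le_sub_right (hstar t ht₀ ht) _
    _ ≤ ∫ y, (v y - c)⁺ ∂ν := integral_decRearr_sub_le_integral_posPart_sub hv c ht₀ ht'

theorem majorization_convex_general {X Y : Type*} [MeasurableSpace X] [MeasurableSpace Y]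
    {μ : Measure X} {ν : Measure Y} [IsFiniteMeasure μ] [IsFiniteMeasure ν]
    {u : X → ℝ} {v : Y → ℝ} (hu : Integrable u μ) (hv : Integrable v ν) (hmass : μ univ = ν univ)
    (hmean : ∫ x, u x ∂μ = ∫ y, v y ∂ν)
    (hstar : ∀ t : ℝ, 0 ≤ t → t ≤ μ.real univ →
      (∫ s in (0 : ℝ)..t, decRearr μ u s) ≤ ∫ s in (0 : ℝ)..t, decRearr ν v s)
    {φ : ℝ → ℝ} (hφ : ConvexOn ℝ univ φ) (hφv : Integrable (fun y => φ (v y)) ν) :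
    Integrable (fun x => φ (u x)) μ ∧ ∫ x, φ (u x) ∂μ ≤ ∫ y, φ (v y) ∂ν :=
  integral_convexOn_comp_le_of_integral_posPart_sub_le hu hv hmass hmean
    (integral_posPart_sub_le_of_integral_decRearr_le hu hv hmass hstar) hφ hφv

/-- **Majorization with equal means**: if additionally `∫ u = ∫ v`, the convex means of `u`
are dominated by those of `v` for all convex `φ`. -/
theorem majorization_convex {X : Type*} [MeasurableSpace X] (μ : Measure X)
    [IsFiniteMeasure μ] (u v : X → ℝ) (hu : Integrable u μ) (hv : Integrable v μ)
    (hmean : (∫ x, u x ∂μ) = ∫ x, v x ∂μ)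
    (hstar : ∀ t : ℝ, 0 ≤ t → t ≤ (μ univ).toReal →
      (∫ s in (0 : ℝ)..t, decRearr μ u s) ≤ ∫ s in (0 : ℝ)..t, decRearr μ v s) :
    ∀ φ : ℝ → ℝ, ConvexOn ℝ univ φ →
      Integrable (fun x => φ (u x)) μ → Integrable (fun x => φ (v x)) μ →
      (∫ x, φ (u x) ∂μ) ≤ ∫ x, φ (v x) ∂μ :=
  fun _ hφ _ hφv => (majorization_convex_general hu hv rfl hmean hstar hφ hφv).2
end
end

section
/- Let n ≥ 2, let D ⊆ ℝ^{n−1} be a bounded open set, ℓ > 0, and Ω = D × (0,ℓ). Suppose u is C² on Ω̄ with u_y(x,0) = u_y(x,ℓ) = 0 for every x ∈ D, and let f = −Δu (a continuous function on Ω̄). Define u^★(x,y) = sup{∫_E u(x,t) dt : E ⊆ (0,ℓ) Lebesgue measurable with |E| = y} and f^★(x,y) = sup{∫_E f(x,t) dt : E ⊆ (0,ℓ) Lebesgue measurable with |E| = y}. Then for every nonnegative C² function G : ℝⁿ → ℝ with compact support contained in Ω, −∫_Ω u^★(x,y) ΔG(x,y) dx dy ≤ ∫_Ω f^★(x,y)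 G(x,y) dx dy. -/
open MeasureTheory Set Bornology

noncomputable section

/-- Points of the cylinder `D × (0,ℓ)` are pairs `(x, y)` with `x ∈ ℝ^m`, `y ∈ ℝ`. -/
abbrev Cyl (m : ℕ) := EuclideanSpace ℝ (Fin m) × ℝ

/-- The Laplacian on the cylinder: sum of all second partial derivatives. -/
def cylLap {m : ℕ} (u : Cyl m → ℝ) (p : Cyl m) : ℝ :=
  (∑ i : Fin m, fderiv ℝ (fun q => fderiv ℝ u q (EuclideanSpace.single i 1, 0)) p
      (EuclideanSpace.single i 1, 0)) +
    fderiv ℝ (fun q => fderiv ℝ u q ((0 : EuclideanSpace ℝ (Fin m)), (1 : ℝ))) p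
      ((0 : EuclideanSpace ℝ (Fin m)), (1 : ℝ))

/-- The Laplacian on `ℝ^m`: sum of second partial derivatives. -/
def lapD {m : ℕ} (ψ : EuclideanSpace ℝ (Fin m) → ℝ) (x : EuclideanSpace ℝ (Fin m)) : ℝ :=
  ∑ i : Fin m, fderiv ℝ (fun y => fderiv ℝ ψ y (EuclideanSpace.single i 1)) x
    (EuclideanSpace.single i 1)

/-- `u` is C² on an open neighborhood of the closure of `A`. -/
def IsC2OnClosure {Y : Type*} [NormedAddCommGroup Y] [NormedSpace ℝ Y]
    (u : Y → ℝ) (A : Set Y) : Prop :=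
  ∃ U, IsOpen U ∧ closure A ⊆ U ∧ ContDiffOn ℝ 2 u U

/-- The star function in the `y`-direction:
`u^★(x,y) = sup {∫_E u(x,t) dt : E ⊆ (0,ℓ) measurable, |E| = y}`. -/
def starFun {m : ℕ} (ℓ : ℝ) (u : Cyl m → ℝ) (p : Cyl m) : ℝ :=
  sSup {I : ℝ | ∃ E : Set ℝ, E ⊆ Ioo 0 ℓ ∧ MeasurableSet E ∧
    volume E = ENNReal.ofReal p.2 ∧ I = ∫ t in E, u (p.1, t)}

open Filter Topology

/-!
On each vertical segment the supremum defining `u^★` is attained on a top set `E`, which carries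
the largest values of `u`. Horizontally, `E` is a competitor on the neighbouring segments, so second
differences of `u^★` dominate the integrals over `E` of second differences of `u`. Vertically, `u^★`
is concave with the level bounding `E` as supergradient, so its second difference is controlled by
the gap between two levels. Since `u_y` vanishes at the ends of the segment, integrating `u_yy` over
superlevel sets bounds `|u_y|` on level sets by `-∫_E u_yy`, which in turn bounds the level gap.
Altogether the sum of the second differences of `u^★` with step `h` is at least
`h² (∫_E Δu - o(1)) ≥ -h² (f^★ + o(1))`, uniformly on compact sets. Moving the differences onto `G`
and letting `h → 0` gives the weak inequality.
-/

section TopSets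

/-- The star function of `v` over `S`: the largest integral of `v` over a subset of `S` of
measure `y`. The function `starFun` is its instance on the vertical segments of a cylinder. -/
def starOn {α : Type*} [MeasurableSpace α] (μ : Measure α) (S : Set α) (v : α → ℝ) (y : ℝ) : ℝ :=
  sSup {I | ∃ E : Set α, E ⊆ S ∧ MeasurableSet E ∧ μ E = ENNReal.ofReal y ∧ I = ∫ t in E, v t ∂μ}

/-- `E` is a subset of `S` of measure `y` carrying the largest values of `v`, with `s` a level that
separates the values on `E` from those on `S \ E`. Such sets attain the supremum in `starOn`. -/
structure IsTopSet {α : Type*} [MeasurableSpace α] (μ : Measure α) (S : Set α) (v : α → ℝ)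
    (y s : ℝ) (E : Set α) : Prop where
  subset : E ⊆ S
  measurableSet : MeasurableSet E
  measure_eq : μ E = ENNReal.ofReal y
  le_of_mem : ∀ t ∈ E, s ≤ v t
  le_of_notMem : ∀ t ∈ S, t ∉ E → v t ≤ s

variable {α : Type*} [MeasurableSpace α] {μ : Measure α} {S A E F : Set α} {v w : α → ℝ}
  {y z s r ε M : ℝ}

namespace IsTopSet

lemma measure_ne_top (hE : IsTopSet μ S v y s E) : μ E ≠ ⊤ :=
  hE.measure_eq ▸ ENNReal.ofReal_ne_top

lemma measureReal_eq (hE : IsTopSet μ S v y s E) (hy : 0 ≤ y) : μ.real E = y := by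
  rw [measureReal_def, hE.measure_eq, ENNReal.toReal_ofReal hy]

/-- The bathtub principle. -/
lemma setIntegral_le (hE : IsTopSet μ S v y s E) (hv : IntegrableOn v S μ) (hAS : A ⊆ S)
    (hA : MeasurableSet A) (hμA : μ A ≠ ⊤) :
    ∫ t in A, v t ∂μ ≤ ∫ t in E, v t ∂μ + s * (μ.real A - μ.real E) := by
  have integrable_sub {B : Set α} (hBS : B ⊆ S) (hμB : μ B ≠ ⊤) :
      IntegrableOn (fun t ↦ v t - s) B μ := (hv.mono_set hBS).sub (integrableOn_const hμB)
  have integral_sub_const {B : Set α} (hBS : B ⊆ S) (hμB : μ B ≠ ⊤) :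
      ∫ t in B, (v t - s) ∂μ = ∫ t in B, v t ∂μ - s * μ.real B := by
    rw [integral_sub (hv.mono_set hBS) (integrableOn_const hμB), setIntegral_const, smul_eq_mul,
      mul_comm]
  have key : ∫ t in A, (v t - s) ∂μ ≤ ∫ t in E, (v t - s) ∂μ := by
    rw [← integral_indicator hA, ← integral_indicator hE.measurableSet]
    refine integral_mono ((integrable_sub hAS hμA).integrable_indicator hA)
      ((integrable_sub hE.subset hE.measure_ne_top).integrable_indicator hE.measurableSet)
      fun t ↦ ?_
    by_cases htA : t ∈ A <;> by_cases htE : t ∈ E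
    · simp [htA, htE]
    · simpa [htA, htE] using hE.le_of_notMem t (hAS htA) htE
    · simpa [htA, htE] using hE.le_of_mem t htE
    · simp [htA, htE]
  rw [integral_sub_const hAS hμA, integral_sub_const hE.subset hE.measure_ne_top] at key
  linarith

lemma isGreatest (hE : IsTopSet μ S v y s E) (hv : IntegrableOn v S μ) :
    IsGreatest {I | ∃ A : Set α, A ⊆ S ∧ MeasurableSet A ∧ μ A = ENNReal.ofReal y ∧
      I = ∫ t in A, v t ∂μ} (∫ t in E, v t ∂μ) := by
  refine ⟨⟨E, hE.subset, hE.measurableSet, hE.measure_eq, rfl⟩, ?_⟩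
  rintro _ ⟨A, hAS, hA, hμA, rfl⟩
  have hAE : μ.real A = μ.real E := by rw [measureReal_def, measureReal_def, hμA, hE.measure_eq]
  simpa [hAE] using hE.setIntegral_le hv hAS hA (hμA ▸ ENNReal.ofReal_ne_top)

lemma starOn_eq (hE : IsTopSet μ S v y s E) (hv : IntegrableOn v S μ) :
    starOn μ S v y = ∫ t in E, v t ∂μ :=
  (hE.isGreatest hv).csSup_eq

lemma setIntegral_le_starOn (hE : IsTopSet μ S v y s E) (hv : IntegrableOn v S μ) (hAS : A ⊆ S)
    (hA : MeasurableSet A) (hμA : μ A = ENNReal.ofReal y) : ∫ t in A, v t ∂μ ≤ starOn μ S v y :=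
  le_csSup (hE.isGreatest hv).bddAbove ⟨A, hAS, hA, hμA, rfl⟩

/-- The separating level is a supergradient of the star function, which is thus concave. -/
lemma starOn_le (hE : IsTopSet μ S v y s E) (hF : IsTopSet μ S v z r F) (hv : IntegrableOn v S μ)
    (hy : 0 ≤ y) (hz : 0 ≤ z) : starOn μ S v z ≤ starOn μ S v y + s * (z - y) := by
  simpa only [hE.starOn_eq hv, hF.starOn_eq hv, hE.measureReal_eq hy, hF.measureReal_eq hz] using
    hE.setIntegral_le hv hF.subset hF.measurableSet hF.measure_ne_top

lemma level_le_level (hE : IsTopSet μ S v y s E) (hF : IsTopSet μ S v z r F) (hy : 0 ≤ y)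
    (hyz : y < z) : r ≤ s := by
  obtain ⟨t, htF, htE⟩ : (F \ E).Nonempty := by
    refine nonempty_of_measure_ne_zero (μ := μ) fun h ↦ ?_
    have : μ F ≤ μ E := measure_mono_ae (ae_le_set.2 h)
    rw [hE.measure_eq, hF.measure_eq, ENNReal.ofReal_le_ofReal_iff hy] at this
    exact hyz.not_ge this
  exact (hF.le_of_mem t htF).trans (hE.le_of_notMem t (hF.subset htF) htE)

lemma measureReal_inter_preimage_Ioo_le (hE : IsTopSet μ S v y s E) (hF : IsTopSet μ S v z r F)
    (hy : 0 ≤ y) (hyz : y ≤ z) : μ.real (S ∩ v ⁻¹' Ioo r s) ≤ z - y := by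
  obtain hsr | hrs := le_or_gt s r
  · simpa [Ioo_eq_empty hsr.not_gt] using hyz
  have hEF : E ⊆ F := fun t ht ↦ by_contra fun htF ↦
    (hrs.trans_le (hE.le_of_mem t ht)).not_ge (hF.le_of_notMem t (hE.subset ht) htF)
  have hsub : S ∩ v ⁻¹' Ioo r s ⊆ F \ E := fun t ht ↦
    ⟨by_contra fun htF ↦ ht.2.1.not_ge (hF.le_of_notMem t ht.1 htF),
      fun htE ↦ ht.2.2.not_ge (hE.le_of_mem t htE)⟩
  calc μ.real (S ∩ v ⁻¹' Ioo r s)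
      ≤ μ.real (F \ E) :=
        measureReal_mono hsub (measure_ne_top_of_subset sdiff_subset hF.measure_ne_top)
    _ = z - y := by
        rw [measureReal_sdiff hEF hE.measurableSet hF.measure_ne_top, hE.measureReal_eq hy,
          hF.measureReal_eq (hy.trans hyz)]

lemma nonempty (hE : IsTopSet μ S v y s E) (hy : 0 < y) : E.Nonempty :=
  nonempty_of_measure_ne_zero (μ := μ) <| by simpa [hE.measure_eq]

lemma nonempty_sdiff (hE : IsTopSet μ S v y s E) (hy : ENNReal.ofReal y < μ S) :
    (S \ E).Nonempty :=
  sdiff_nonempty.2 fun h ↦ hy.not_ge <| hE.measure_eq ▸ measure_mono h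

lemma abs_level_le (hE : IsTopSet μ S v y s E) (hM : ∀ t ∈ S, |v t| ≤ M) (hy : 0 < y)
    (hyS : ENNReal.ofReal y < μ S) : |s| ≤ M := by
  obtain ⟨t, htE⟩ := hE.nonempty hy
  obtain ⟨t', ht'S, ht'E⟩ := hE.nonempty_sdiff hyS
  exact abs_le.2 ⟨(abs_le.1 (hM t' ht'S)).1.trans (hE.le_of_notMem t' ht'S ht'E),
    (hE.le_of_mem t htE).trans (abs_le.1 (hM t (hE.subset htE))).2⟩

lemma starOn_le_add (hE : IsTopSet μ S v y s E) (hF : IsTopSet μ S w y r F)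
    (hv : IntegrableOn v S μ) (hw : IntegrableOn w S μ) (hy : 0 ≤ y)
    (hvw : ∀ t ∈ S, v t ≤ w t + ε) : starOn μ S v y ≤ starOn μ S w y + ε * y := by
  calc starOn μ S v y
      = ∫ t in E, v t ∂μ := hE.starOn_eq hv
    _ ≤ ∫ t in E, (w t + ε) ∂μ :=
        setIntegral_mono_on (hv.mono_set hE.subset)
          ((hw.mono_set hE.subset).add (integrableOn_const hE.measure_ne_top)) hE.measurableSet
          fun t ht ↦ hvw t (hE.subset ht)
    _ = ∫ t in E, w t ∂μ + ε * y := by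
        rw [integral_add (hw.mono_set hE.subset) (integrableOn_const hE.measure_ne_top),
          setIntegral_const, hE.measureReal_eq hy, smul_eq_mul, mul_comm]
    _ ≤ starOn μ S w y + ε * y := by
        gcongr
        exact hF.setIntegral_le_starOn hw hE.subset hE.measurableSet hE.measure_eq

lemma abs_starOn_sub_starOn_le (hE : IsTopSet μ S v y s E) (hF : IsTopSet μ S w y r F)
    (hv : IntegrableOn v S μ) (hw : IntegrableOn w S μ) (hy : 0 ≤ y)
    (hvw : ∀ t ∈ S, |v t - w t| ≤ ε) : |starOn μ S v y - starOn μ S w y| ≤ ε * y := by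
  have h := hE.starOn_le_add (ε := ε) hF hv hw hy fun t ht ↦ by linarith [abs_le.1 (hvw t ht)]
  have h' := hF.starOn_le_add (ε := ε) hE hw hv hy fun t ht ↦ by linarith [abs_le.1 (hvw t ht)]
  exact abs_sub_le_iff.2 ⟨by linarith, by linarith⟩

lemma abs_starOn_sub_le (hE : IsTopSet μ S v y s E) (hF : IsTopSet μ S v z r F)
    (hv : IntegrableOn v S μ) (hM : ∀ t ∈ S, |v t| ≤ M) (hy : 0 < y) (hz : 0 < z)
    (hyS : ENNReal.ofReal y < μ S) (hzS : ENNReal.ofReal z < μ S) :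
    |starOn μ S v z - starOn μ S v y| ≤ M * |z - y| := by
  have mul_le {c d : ℝ} (hc : |c| ≤ M) : c * d ≤ M * |d| :=
    (le_abs_self _).trans <| abs_mul c d ▸ mul_le_mul_of_nonneg_right hc (abs_nonneg d)
  have hs := mul_le (d := z - y) (hE.abs_level_le hM hy hyS)
  have hr := mul_le (d := y - z) (hF.abs_level_le hM hz hzS)
  rw [abs_sub_comm] at hr
  exact abs_sub_le_iff.2 ⟨by linarith [hE.starOn_le hF hv hy.le hz.le],
    by linarith [hF.starOn_le hE hv hz.le hy.le]⟩

end IsTopSet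

lemma exists_measure_Iio_le_le_measure_Iic (ν : Measure ℝ) [IsFiniteMeasure ν] {c : ENNReal}
    (hc0 : 0 < c) (hc : c < ν univ) : ∃ r, ν (Iio r) ≤ c ∧ c ≤ ν (Iic r) := by
  set T : Set ℝ := {r | c ≤ ν (Iic r)}
  have hT : T.Nonempty := ((tendsto_measure_Iic_atTop ν).eventually (lt_mem_nhds hc)).exists.imp
    fun _ h ↦ h.le
  have hTb : BddBelow T := by
    have h0 : Tendsto (fun r ↦ ν (Iic r)) atBot (𝓝 0) := by
      have := tendsto_measure_iInter_atBot (μ := ν) (s := fun r : ℝ ↦ Iic r)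
        (fun _ ↦ measurableSet_Iic.nullMeasurableSet) monotone_Iic ⟨0, measure_ne_top _ _⟩
      rwa [iInter_Iic_eq_empty_iff.2 (by simp [not_bddBelow_univ]), measure_empty] at this
    obtain ⟨b, hb⟩ := (h0.eventually (gt_mem_nhds hc0)).exists
    exact ⟨b, fun r hr ↦ le_of_not_gt fun hrb ↦
      (hb.trans_le hr).not_ge (measure_mono (Iic_subset_Iic.2 hrb.le))⟩
  refine ⟨sInf T, ?_, ?_⟩
  · obtain ⟨b, hb_mono, hb_lt, hb⟩ := exists_seq_strictMono_tendsto (sInf T)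
    have h := (monotone_Iic.comp hb_mono.monotone).measure_iUnion (μ := ν)
    simp only [Function.comp_apply, iUnion_Iic_eq_Iio_of_lt_of_tendsto hb_lt hb] at h
    rw [h]
    exact iSup_le fun n ↦ (not_le.1 (notMem_of_lt_csInf (s := T) (hb_lt n) hTb)).le
  · have h := tendsto_measure_biInter_gt (μ := ν) (s := fun r : ℝ ↦ Iic r) (a := sInf T)
      (fun _ _ ↦ measurableSet_Iic.nullMeasurableSet) (fun _ _ _ h ↦ Iic_subset_Iic.2 h)
      ⟨sInf T + 1, by simp, measure_ne_top _ _⟩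
    rw [show ⋂ r > sInf T, Iic r = Iic (sInf T) by
      ext x; simpa using forall_gt_imp_ge_iff_le_of_dense] at h
    refine ge_of_tendsto h (eventually_mem_nhdsWithin.mono fun r hr ↦ ?_)
    obtain ⟨r', hr', hrr'⟩ := exists_lt_of_csInf_lt hT hr
    exact le_trans hr' (measure_mono (Iic_subset_Iic.2 hrr'.le))

lemma exists_measurableSet_measure_eq_of_subset {μ : Measure ℝ} [NullSingletonClass μ] {P Q : Set ℝ}
    (hP : MeasurableSet P) (hQ : MeasurableSet Q) (hPQ : P ⊆ Q) (hμQ : μ Q ≠ ⊤) {c : ENNReal}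
    (hPc : μ P ≤ c) (hcQ : c ≤ μ Q) : ∃ E, P ⊆ E ∧ E ⊆ Q ∧ MeasurableSet E ∧ μ E = c := by
  rcases hPc.eq_or_lt with rfl | hPc
  · exact ⟨P, Subset.rfl, hPQ, hP, rfl⟩
  rcases hcQ.eq_or_lt with rfl | hcQ
  · exact ⟨Q, hPQ, Subset.rfl, hQ, rfl⟩
  have hμP : μ P ≠ ⊤ := hPc.ne_top
  set ν := μ.restrict (Q \ P)
  have : IsFiniteMeasure ν :=
    isFiniteMeasure_restrict.2 (measure_ne_top_of_subset sdiff_subset hμQ)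
  obtain ⟨r, hr, hr'⟩ := exists_measure_Iio_le_le_measure_Iic ν (tsub_pos_of_lt hPc) <| by
    rw [Measure.restrict_apply_univ, measure_sdiff hPQ hP.nullMeasurableSet hμP]
    exact (ENNReal.cancel_of_ne hμP).tsub_lt_tsub_right_of_le hPc.le hcQ
  have hνr : ν (Iic r) = c - μ P := le_antisymm ((measure_congr Iio_ae_eq_Iic).ge.trans hr) hr'
  refine ⟨P ∪ Iic r ∩ (Q \ P), subset_union_left,
    union_subset hPQ (inter_subset_right.trans sdiff_subset),
    hP.union (measurableSet_Iic.inter (hQ.diff hP)), ?_⟩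
  rw [measure_union (disjoint_sdiff_right.mono_right inter_subset_right)
    (measurableSet_Iic.inter (hQ.diff hP)), ← Measure.restrict_apply measurableSet_Iic]
  exact hνr ▸ add_tsub_cancel_of_le hPc.le

lemma measurableSet_inter_preimage {β : Type*} [MeasurableSpace β] {f : α → β}
    (hS : MeasurableSet S) (hf : Measurable (S.domRestrict f)) {O : Set β} (hO : MeasurableSet O) :
    MeasurableSet (S ∩ f ⁻¹' O) :=
  Subtype.image_preimage_coe S (f ⁻¹' O) ▸ hS.subtype_image (hf hO)

lemma exists_isTopSet {μ : Measure ℝ} [NullSingletonClass μ] {S : Set ℝ} (hS : MeasurableSet S)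
    (hμS : μ S ≠ ⊤) {v : ℝ → ℝ} (hv : Measurable (S.domRestrict v)) {y : ℝ} (hy : 0 < y)
    (hyS : ENNReal.ofReal y < μ S) : ∃ s E, IsTopSet μ S v y s E := by
  set ν := (μ.comap ((↑) : S → ℝ)).map (-S.domRestrict v)
  have ν_apply {O : Set ℝ} (hO : MeasurableSet O) : ν O = μ (S ∩ (fun t ↦ -v t) ⁻¹' O) := by
    rw [Measure.map_apply hv.neg hO, comap_subtype_coe_apply hS, ← Subtype.image_preimage_coe]
    rfl
  have : IsFiniteMeasure ν := ⟨by simpa [ν_apply MeasurableSet.univ] using hμS.lt_top⟩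
  obtain ⟨r, hr, hr'⟩ := exists_measure_Iio_le_le_measure_Iic ν (ENNReal.ofReal_pos.2 hy)
    (by simpa [ν_apply MeasurableSet.univ])
  rw [ν_apply measurableSet_Iio] at hr
  rw [ν_apply measurableSet_Iic] at hr'
  obtain ⟨E, hPE, hEQ, hE, hμE⟩ := exists_measurableSet_measure_eq_of_subset
    (measurableSet_inter_preimage hS hv measurableSet_Iio.neg)
    (measurableSet_inter_preimage hS hv measurableSet_Iic.neg)
    (inter_subset_inter_right _ fun _ h ↦ le_of_lt h)
    (measure_ne_top_of_subset inter_subset_left hμS) hr hr'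
  exact ⟨-r, E, hEQ.trans inter_subset_left, hE, hμE, fun t ht ↦ neg_le.1 (hEQ ht).2,
    fun t htS htE ↦ le_neg.1 (le_of_not_gt fun h ↦ htE (hPE ⟨htS, h⟩))⟩

end TopSets

section LevelSets

lemma ae_deriv_eq_zero_of_eq (f f' : ℝ → ℝ) (c : ℝ) :
    ∀ᵐ t, f t = c → HasDerivAt f (f' t) t → f' t = 0 := by
  set T : Set ℝ := {t | f t = c ∧ HasDerivAt f (f' t) t ∧ f' t ≠ 0}
  have hT : T.Countable := by
    refine (countable_setOfPred_isolated_right_within (s := T)).mono fun t ht ↦ ?_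
    have hne : ∀ᶠ z in 𝓝[T ∩ Ioi t] t, f z ≠ c :=
      (ht.2.1.eventually_ne ht.2.2).filter_mono (nhdsWithin_mono t fun z hz ↦ ne_of_gt hz.2)
    have heq : ∀ᶠ z in 𝓝[T ∩ Ioi t] t, f z = c :=
      eventually_mem_nhdsWithin.mono fun z hz ↦ hz.1.1
    exact ⟨ht, eventually_false_iff_eq_bot.1 <| (hne.and heq).mono fun z hz ↦ hz.1 hz.2⟩
  filter_upwards [hT.ae_notMem volume] with t ht hft hf
  by_contra hne
  exact ht ⟨hft, hf, hne⟩

lemma volume_image_le_of_abs_deriv_le {f f' : ℝ → ℝ} {s : Set ℝ} {K : ℝ} (hs : MeasurableSet s)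
    (hf : ∀ t ∈ s, HasDerivAt f (f' t) t) (hK : ∀ t ∈ s, |f' t| ≤ K) :
    volume (f '' s) ≤ ENNReal.ofReal K * volume s := by
  refine (addHaar_image_le_lintegral_abs_det_fderiv volume hs
    fun t ht ↦ (hf t ht).hasDerivWithinAt.hasFDerivWithinAt).trans ?_
  rw [← setLIntegral_const]
  refine setLIntegral_mono measurable_const fun t ht ↦ ENNReal.ofReal_le_ofReal ?_
  simpa using hK t ht

/-- `v` is twice continuously differentiable at the points of `I`, with derivatives `v'`, `v''`. -/
structure IsC2On (v v' v'' : ℝ → ℝ) (I : Set ℝ) : Prop where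
  hasDerivAt : ∀ t ∈ I, HasDerivAt v (v' t) t
  hasDerivAt_deriv : ∀ t ∈ I, HasDerivAt v' (v'' t) t
  continuousOn_deriv_deriv : ContinuousOn v'' I

namespace IsC2On

variable {v v' v'' : ℝ → ℝ} {I J : Set ℝ}

lemma mono (hv : IsC2On v v' v'' I) (hJI : J ⊆ I) : IsC2On v v' v'' J :=
  ⟨fun t ht ↦ hv.hasDerivAt t (hJI ht), fun t ht ↦ hv.hasDerivAt_deriv t (hJI ht),
    hv.continuousOn_deriv_deriv.mono hJI⟩

lemma continuousOn (hv : IsC2On v v' v'' I) : ContinuousOn v I :=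
  HasDerivAt.continuousOn hv.hasDerivAt

lemma continuousOn_deriv (hv : IsC2On v v' v'' I) : ContinuousOn v' I :=
  HasDerivAt.continuousOn hv.hasDerivAt_deriv

end IsC2On

variable {a b σ : ℝ} {v v' v'' : ℝ → ℝ}

lemma ae_deriv_deriv_eq_zero_of_eq (hv : IsC2On v v' v'' (Icc a b)) (σ : ℝ) :
    ∀ᵐ t, t ∈ Icc a b → v t = σ → v'' t = 0 := by
  filter_upwards [ae_deriv_eq_zero_of_eq v v' σ, ae_deriv_eq_zero_of_eq v' v'' 0]
    with t h h' ht hσ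
  exact h' (h hσ (hv.hasDerivAt t ht)) (hv.hasDerivAt_deriv t ht)

lemma integral_monotone_comp_mul_deriv_le {φ : ℝ → ℝ} (hφ : Monotone φ) (hφ1 : ContDiff ℝ 1 φ)
    (hab : a ≤ b) (hv : IsC2On v v' v'' (Icc a b)) :
    ∫ t in a..b, φ (v t) * v'' t ≤ φ (v b) * v' b - φ (v a) * v' a := by
  rw [← uIcc_of_le hab] at hv
  have hφv (t) (ht : t ∈ uIcc a b) : HasDerivAt (φ ∘ v) (deriv φ (v t) * v' t) t :=
    (hφ1.differentiable one_ne_zero _).hasDerivAt.comp t (hv.hasDerivAt t ht)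
  have hparts := intervalIntegral.integral_mul_deriv_eq_deriv_mul hφv hv.hasDerivAt_deriv
    (((hφ1.continuous_deriv le_rfl).comp_continuousOn hv.continuousOn).mul
      hv.continuousOn_deriv).intervalIntegrable
    hv.continuousOn_deriv_deriv.intervalIntegrable
  have hnonneg : 0 ≤ ∫ t in a..b, deriv φ (v t) * v' t * v' t :=
    intervalIntegral.integral_nonneg hab fun t _ ↦ by
      rw [mul_assoc]
      exact mul_nonneg hφ.deriv_nonneg (mul_self_nonneg _)
  simp only [Function.comp_apply] at hparts
  linarith

lemma integral_comp_mul_deriv_le_of_tendsto {φ : ℕ → ℝ → ℝ} {ψ : ℝ → ℝ}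
    (hφ : ∀ n, Monotone (φ n)) (hφ1 : ∀ n, ContDiff ℝ 1 (φ n)) (hφb : ∀ n r, |φ n r| ≤ 1)
    (hφψ : ∀ r, Tendsto (fun n ↦ φ n r) atTop (𝓝 (ψ r))) (hab : a ≤ b)
    (hv : IsC2On v v' v'' (Icc a b)) :
    ∫ t in a..b, ψ (v t) * v'' t ≤ ψ (v b) * v' b - ψ (v a) * v' a := by
  have hsub : uIoc a b ⊆ Icc a b := uIoc_of_le hab ▸ Ioc_subset_Icc_self
  refine le_of_tendsto_of_tendsto'
    (intervalIntegral.tendsto_integral_filter_of_dominated_convergence (fun t ↦ |v'' t|)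
      (.of_forall fun n ↦ ?_) (.of_forall fun n ↦ .of_forall fun t _ ↦ ?_) ?_
      (.of_forall fun t _ ↦ (hφψ _).mul_const _))
    (((hφψ _).mul_const _).sub ((hφψ _).mul_const _))
    fun n ↦ integral_monotone_comp_mul_deriv_le (hφ n) (hφ1 n) hab hv
  · exact ((((hφ1 n).continuous.comp_continuousOn hv.continuousOn).mul
      hv.continuousOn_deriv_deriv).mono hsub).aestronglyMeasurable
      measurableSet_uIoc
  · rw [norm_mul, Real.norm_eq_abs, Real.norm_eq_abs]
    exact mul_le_of_le_one_left (abs_nonneg _) (hφb n _)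
  · exact ((uIcc_of_le hab).symm ▸ hv.continuousOn_deriv_deriv.abs).intervalIntegrable

lemma tendsto_smoothTransition_indicator_Ioi (σ r : ℝ) :
    Tendsto (fun n : ℕ ↦ Real.smoothTransition (n * (r - σ) + 0)) atTop
      (𝓝 ((Ioi σ).indicator 1 r)) := by
  rcases le_or_gt r σ with h | h
  · rw [indicator_of_notMem (notMem_Ioi.2 h)]
    refine tendsto_const_nhds.congr fun n ↦ (Real.smoothTransition.zero_of_nonpos ?_).symm
    simpa using mul_nonpos_of_nonneg_of_nonpos n.cast_nonneg (sub_nonpos.2 h)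
  · rw [indicator_of_mem (mem_Ioi.2 h)]
    have htop : Tendsto (fun n : ℕ ↦ (n : ℝ) * (r - σ) + 0) atTop atTop := by
      simpa using tendsto_natCast_atTop_atTop.atTop_mul_const (sub_pos.2 h)
    refine tendsto_const_nhds.congr' ?_
    filter_upwards [htop.eventually_ge_atTop 1] with n hn
    exact (Real.smoothTransition.one_of_one_le hn).symm

lemma tendsto_smoothTransition_indicator_Ici (σ r : ℝ) :
    Tendsto (fun n : ℕ ↦ Real.smoothTransition (n * (r - σ) + 1)) atTop
      (𝓝 ((Ici σ).indicator 1 r)) := by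
  rcases lt_or_ge r σ with h | h
  · rw [indicator_of_notMem (notMem_Ici.2 h)]
    have hbot : Tendsto (fun n : ℕ ↦ (n : ℝ) * (r - σ) + 1) atTop atBot :=
      tendsto_atBot_add_const_right _ _
        (tendsto_natCast_atTop_atTop.atTop_mul_const_of_neg (sub_neg.2 h))
    refine tendsto_const_nhds.congr' ?_
    filter_upwards [hbot.eventually_le_atBot 0] with n hn
    exact (Real.smoothTransition.zero_of_nonpos hn).symm
  · rw [indicator_of_mem (mem_Ici.2 h)]
    refine tendsto_const_nhds.congr fun n ↦ (Real.smoothTransition.one_of_one_le ?_).symm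
    simpa using mul_nonneg n.cast_nonneg (sub_nonneg.2 h)

lemma setIntegral_preimage_le_of_tendsto {J : Set ℝ} (hJ : MeasurableSet J) {κ : ℝ}
    (hκ : ∀ r, Tendsto (fun n : ℕ ↦ Real.smoothTransition (n * (r - σ) + κ)) atTop
      (𝓝 (J.indicator 1 r)))
    (hab : a ≤ b) (hv : IsC2On v v' v'' (Icc a b)) :
    ∫ t in Ioc a b ∩ v ⁻¹' J, v'' t ≤ J.indicator 1 (v b) * v' b - J.indicator 1 (v a) * v' a := by
  have hmeas : MeasurableSet (Ioc a b ∩ v ⁻¹' J) :=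
    measurableSet_inter_preimage measurableSet_Ioc
      (hv.continuousOn.mono Ioc_subset_Icc_self).domRestrict.measurable hJ
  calc ∫ t in Ioc a b ∩ v ⁻¹' J, v'' t
      = ∫ t in a..b, J.indicator 1 (v t) * v'' t := by
        rw [intervalIntegral.integral_of_le hab, ← inter_self (Ioc a b), inter_assoc,
          ← setIntegral_indicator hmeas, inter_self]
        refine setIntegral_congr_fun measurableSet_Ioc fun t ht ↦ ?_
        by_cases htJ : v t ∈ J <;> simp [ht, htJ]
    _ ≤ _ := by
        refine integral_comp_mul_deriv_le_of_tendsto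
          (φ := fun n r ↦ Real.smoothTransition (n * (r - σ) + κ))
          (fun n r r' h ↦ Real.smoothTransition.monotone (by gcongr))
          (fun n ↦ Real.smoothTransition.contDiff.comp (by fun_prop))
          (fun n r ↦ ?_) hκ hab hv
        rw [abs_of_nonneg (Real.smoothTransition.nonneg _)]
        exact Real.smoothTransition.le_one _

lemma setIntegral_preimage_Ioi_le (hab : a ≤ b) (hv : IsC2On v v' v'' (Icc a b)) (σ : ℝ) :
    ∫ t in Ioc a b ∩ v ⁻¹' Ioi σ, v'' t ≤
      (Ioi σ).indicator 1 (v b) * v' b - (Ioi σ).indicator 1 (v a) * v' a :=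
  setIntegral_preimage_le_of_tendsto measurableSet_Ioi (tendsto_smoothTransition_indicator_Ioi σ)
    hab hv

lemma setIntegral_preimage_Ici_le (hab : a ≤ b) (hv : IsC2On v v' v'' (Icc a b)) (σ : ℝ) :
    ∫ t in Ioc a b ∩ v ⁻¹' Ici σ, v'' t ≤
      (Ici σ).indicator 1 (v b) * v' b - (Ici σ).indicator 1 (v a) * v' a :=
  setIntegral_preimage_le_of_tendsto measurableSet_Ici (tendsto_smoothTransition_indicator_Ici σ)
    hab hv

end LevelSets

section Neumann

variable {a b C s σ σ₁ σ₂ : ℝ} {v v' v'' : ℝ → ℝ} {E F : Set ℝ}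

lemma setIntegral_Ioo_inter_eq_setIntegral_Ioc_inter (f : ℝ → ℝ) (A : Set ℝ) :
    ∫ t in Ioo a b ∩ A, f t = ∫ t in Ioc a b ∩ A, f t :=
  setIntegral_congr_set (Ioo_ae_eq_Ioc.inter .rfl)

namespace IsC2On

lemma measurableSet_inter_preimage (hv : IsC2On v v' v'' (Icc a b)) {J : Set ℝ}
    (hJ : MeasurableSet J) : MeasurableSet (Ioo a b ∩ v ⁻¹' J) :=
  _root_.measurableSet_inter_preimage measurableSet_Ioo
    (hv.continuousOn.mono Ioo_subset_Icc_self).domRestrict.measurable hJ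

lemma integrableOn_deriv_deriv (hv : IsC2On v v' v'' (Icc a b)) (hE : E ⊆ Icc a b) :
    IntegrableOn v'' E :=
  (hv.continuousOn_deriv_deriv.integrableOn_compact isCompact_Icc).mono_set hE

/-- Level sets of `v` do not contribute to integrals of `v''`. -/
lemma setIntegral_deriv_deriv_congr (hv : IsC2On v v' v'' (Icc a b)) (hE : MeasurableSet E)
    (hF : MeasurableSet F) (hEI : E ⊆ Icc a b) (hFI : F ⊆ Icc a b)
    (hEF : ∀ t ∈ Icc a b, v t ≠ σ → (t ∈ E ↔ t ∈ F)) : ∫ t in E, v'' t = ∫ t in F, v'' t := by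
  rw [← integral_indicator hE, ← integral_indicator hF]
  refine integral_congr_ae ?_
  filter_upwards [ae_deriv_deriv_eq_zero_of_eq hv σ] with t ht
  by_cases htI : t ∈ Icc a b
  · by_cases htσ : v t = σ
    · by_cases htE : t ∈ E <;> by_cases htF : t ∈ F <;> simp [htE, htF, ht htI htσ]
    · exact indicator_eq_indicator (hEF t htI htσ) rfl
  · rw [indicator_of_notMem (mt (hEI ·) htI), indicator_of_notMem (mt (hFI ·) htI)]

lemma setIntegral_superlevel_nonpos (hv : IsC2On v v' v'' (Icc a b)) (hab : a ≤ b) (ha : v' a = 0)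
    (hb : v' b = 0) (σ : ℝ) : ∫ t in Ioo a b ∩ v ⁻¹' Ioi σ, v'' t ≤ 0 := by
  rw [setIntegral_Ioo_inter_eq_setIntegral_Ioc_inter]
  simpa [ha, hb] using setIntegral_preimage_Ioi_le hab hv σ

/-- On one side of `ξ` the superlevel set is taken open, on the other side closed, so that the
boundary term at `ξ` survives on exactly one side. -/
lemma abs_deriv_le_neg_setIntegral_superlevel (hv : IsC2On v v' v'' (Icc a b)) (ha : v' a = 0)
    (hb : v' b = 0) {ξ : ℝ} (hξ : ξ ∈ Icc a b) :
    |v' ξ| ≤ -∫ t in Ioo a b ∩ v ⁻¹' Ioi (v ξ), v'' t := by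
  have hl : IsC2On v v' v'' (Icc a ξ) := hv.mono (Icc_subset_Icc_right hξ.2)
  have hr : IsC2On v v' v'' (Icc ξ b) := hv.mono (Icc_subset_Icc_left hξ.1)
  have closed_eq_open {c d : ℝ} (h : IsC2On v v' v'' (Icc c d)) :
      ∫ t in Ioc c d ∩ v ⁻¹' Ici (v ξ), v'' t = ∫ t in Ioc c d ∩ v ⁻¹' Ioi (v ξ), v'' t := by
    have hIoc := (h.continuousOn.mono Ioc_subset_Icc_self).domRestrict.measurable
    refine h.setIntegral_deriv_deriv_congr (σ := v ξ)
      (_root_.measurableSet_inter_preimage measurableSet_Ioc hIoc measurableSet_Ici)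
      (_root_.measurableSet_inter_preimage measurableSet_Ioc hIoc measurableSet_Ioi)
      (inter_subset_left.trans Ioc_subset_Icc_self) (inter_subset_left.trans Ioc_subset_Icc_self)
      fun t _ htξ ↦ and_congr_right fun _ ↦ (Ne.symm htξ).le_iff_lt
  have hsplit : ∫ t in Ioo a b ∩ v ⁻¹' Ioi (v ξ), v'' t =
      (∫ t in Ioc a ξ ∩ v ⁻¹' Ioi (v ξ), v'' t) + ∫ t in Ioc ξ b ∩ v ⁻¹' Ioi (v ξ), v'' t := by
    have hIoc := (hr.continuousOn.mono Ioc_subset_Icc_self).domRestrict.measurable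
    rw [setIntegral_Ioo_inter_eq_setIntegral_Ioc_inter,
      ← Ioc_union_Ioc_eq_Ioc hξ.1 hξ.2, union_inter_distrib_right]
    exact setIntegral_union
      ((Ioc_disjoint_Ioc_of_le le_rfl).mono inter_subset_left inter_subset_left)
      (_root_.measurableSet_inter_preimage measurableSet_Ioc hIoc measurableSet_Ioi)
      (hl.integrableOn_deriv_deriv (inter_subset_left.trans Ioc_subset_Icc_self))
      (hr.integrableOn_deriv_deriv (inter_subset_left.trans Ioc_subset_Icc_self))
  have hl_open := setIntegral_preimage_Ioi_le hξ.1 hl (v ξ)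
  have hl_closed := setIntegral_preimage_Ici_le hξ.1 hl (v ξ)
  have hr_open := setIntegral_preimage_Ioi_le hξ.2 hr (v ξ)
  have hr_closed := setIntegral_preimage_Ici_le hξ.2 hr (v ξ)
  rw [closed_eq_open hl] at hl_closed
  rw [closed_eq_open hr] at hr_closed
  simp only [ha, hb, mul_zero, indicator_of_notMem self_notMem_Ioi,
    indicator_of_mem self_mem_Ici, Pi.one_apply, one_mul, zero_mul, sub_zero, zero_sub] at *
  exact abs_le.2 ⟨by linarith, by linarith⟩

lemma abs_setIntegral_superlevel_sub_le (hv : IsC2On v v' v'' (Icc a b)) (hab : a ≤ b)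
    (hC : ∀ t ∈ Icc a b, |v'' t| ≤ C) (hs : s ∈ Icc σ₂ σ₁) (hσ : σ ∈ Icc σ₂ σ₁) :
    |(∫ t in Ioo a b ∩ v ⁻¹' Ioi σ, v'' t) - ∫ t in Ioo a b ∩ v ⁻¹' Ioi s, v'' t| ≤
      C * volume.real (Ioo a b ∩ v ⁻¹' Ioo σ₂ σ₁) := by
  wlog hσs : σ ≤ s generalizing σ s
  · rw [abs_sub_comm]
    exact this hσ hs (le_of_not_ge hσs)
  have sub_Icc (J : Set ℝ) : Ioo a b ∩ v ⁻¹' J ⊆ Icc a b :=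
    inter_subset_left.trans Ioo_subset_Icc_self
  have hdiff : (∫ t in Ioo a b ∩ v ⁻¹' Ioi σ, v'' t) - ∫ t in Ioo a b ∩ v ⁻¹' Ioi s, v'' t =
      ∫ t in Ioo a b ∩ v ⁻¹' Ioo σ s, v'' t := by
    rw [← Ioc_union_Ioi_eq_Ioi hσs, preimage_union, inter_union_distrib_left,
      setIntegral_union _ (hv.measurableSet_inter_preimage measurableSet_Ioi)
        (hv.integrableOn_deriv_deriv (sub_Icc _)) (hv.integrableOn_deriv_deriv (sub_Icc _)),
      add_sub_cancel_right]
    · exact hv.setIntegral_deriv_deriv_congr (σ := s)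
        (hv.measurableSet_inter_preimage measurableSet_Ioc)
        (hv.measurableSet_inter_preimage measurableSet_Ioo) (sub_Icc _) (sub_Icc _)
        fun t _ hts ↦ and_congr_right fun _ ↦ and_congr_right fun _ ↦ hts.le_iff_lt
    · exact ((Ioc_disjoint_Ioi le_rfl).preimage v).mono inter_subset_right inter_subset_right
  have hsub : Ioo a b ∩ v ⁻¹' Ioo σ s ⊆ Ioo a b ∩ v ⁻¹' Ioo σ₂ σ₁ :=
    inter_subset_inter_right _ (preimage_mono (Ioo_subset_Ioo hσ.1 hs.2))
  have hfin : volume (Ioo a b ∩ v ⁻¹' Ioo σ₂ σ₁) ≠ ⊤ :=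
    measure_ne_top_of_subset inter_subset_left measure_Ioo_lt_top.ne
  have hC0 : 0 ≤ C := (abs_nonneg _).trans (hC a (left_mem_Icc.2 hab))
  calc |_| = ‖∫ t in Ioo a b ∩ v ⁻¹' Ioo σ s, v'' t‖ := by rw [hdiff, Real.norm_eq_abs]
    _ ≤ C * volume.real (Ioo a b ∩ v ⁻¹' Ioo σ s) :=
        norm_setIntegral_le_of_norm_le_const (measure_lt_top_of_subset hsub hfin)
          fun t ht ↦ hC t (sub_Icc _ ht)
    _ ≤ C * volume.real (Ioo a b ∩ v ⁻¹' Ioo σ₂ σ₁) := by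
        gcongr

/-- The values strictly between the levels are the image of a set on which `v'` is controlled. -/
lemma sub_le_of_superlevel (hv : IsC2On v v' v'' (Icc a b)) (ha : v' a = 0) (hb : v' b = 0)
    (hC : ∀ t ∈ Icc a b, |v'' t| ≤ C) (hs : s ∈ Icc σ₂ σ₁) {p q : ℝ} (hp : p ∈ Ioo a b)
    (hq : q ∈ Ioo a b) (hpσ : v p ≤ σ₂) (hqσ : σ₁ ≤ v q) :
    σ₁ - σ₂ ≤ (-(∫ t in Ioo a b ∩ v ⁻¹' Ioi s, v'' t) +
      C * volume.real (Ioo a b ∩ v ⁻¹' Ioo σ₂ σ₁)) * volume.real (Ioo a b ∩ v ⁻¹' Ioo σ₂ σ₁) := by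
  set N := Ioo a b ∩ v ⁻¹' Ioo σ₂ σ₁
  set K := -(∫ t in Ioo a b ∩ v ⁻¹' Ioi s, v'' t) + C * volume.real N
  have hN : N ⊆ Icc a b := inter_subset_left.trans Ioo_subset_Icc_self
  have hNfin : volume N ≠ ⊤ := measure_ne_top_of_subset inter_subset_left measure_Ioo_lt_top.ne
  have hab : a ≤ b := (hp.1.trans hp.2).le
  have hK : ∀ t ∈ N, |v' t| ≤ K := fun t ht ↦
    (hv.abs_deriv_le_neg_setIntegral_superlevel ha hb (hN ht)).trans <| by
      have := abs_le.1 (hv.abs_setIntegral_superlevel_sub_le hab hC hs (Ioo_subset_Icc_self ht.2))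
      linarith
  have hK0 : 0 ≤ K := by
    have hC0 : 0 ≤ C := (abs_nonneg _).trans (hC a (left_mem_Icc.2 hab))
    have := hv.setIntegral_superlevel_nonpos hab ha hb s
    have : 0 ≤ C * volume.real N := by positivity
    linarith
  have himage : Ioo σ₂ σ₁ ⊆ v '' N := fun r hr ↦ by
    obtain ⟨t, ht, rfl⟩ := isPreconnected_Ioo.intermediate_value hp hq
      (hv.continuousOn.mono Ioo_subset_Icc_self) ⟨hpσ.trans hr.1.le, hr.2.le.trans hqσ⟩
    exact ⟨t, ⟨ht, hr⟩, rfl⟩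
  have hvol : ENNReal.ofReal (σ₁ - σ₂) ≤ ENNReal.ofReal (K * volume.real N) := by
    rw [← Real.volume_Ioo, ENNReal.ofReal_mul hK0, ofReal_measureReal hNfin]
    exact (measure_mono himage).trans (volume_image_le_of_abs_deriv_le
      (hv.measurableSet_inter_preimage measurableSet_Ioo) (fun t ht ↦ hv.hasDerivAt t (hN ht)) hK)
  exact (ENNReal.ofReal_le_ofReal_iff (by positivity)).1 hvol

lemma setIntegral_topSet_eq (hv : IsC2On v v' v'' (Icc a b)) {y : ℝ}
    (hE : IsTopSet volume (Ioo a b) v y s E) :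
    ∫ t in E, v'' t = ∫ t in Ioo a b ∩ v ⁻¹' Ioi s, v'' t := by
  rw [← inter_eq_right.2 hE.subset]
  have hE' : MeasurableSet (Ioo a b ∩ E) := measurableSet_Ioo.inter hE.measurableSet
  refine hv.setIntegral_deriv_deriv_congr (σ := s) hE'
    (hv.measurableSet_inter_preimage measurableSet_Ioi)
    (inter_subset_left.trans Ioo_subset_Icc_self) (inter_subset_left.trans Ioo_subset_Icc_self)
    fun t _ hts ↦ and_congr_right fun htI ↦ ⟨fun h ↦ (hE.le_of_mem t h).lt_of_ne' hts, fun h ↦ ?_⟩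
  by_contra htE
  exact (hE.le_of_notMem t htI htE).not_gt h

lemma level_sub_level_le (hv : IsC2On v v' v'' (Icc a b)) (ha : v' a = 0) (hb : v' b = 0)
    (hC : ∀ t ∈ Icc a b, |v'' t| ≤ C) {y t : ℝ} (ht : 0 < t) (hty : t < y) (htb : y + t < b - a)
    (hE : IsTopSet volume (Ioo a b) v y s E)
    (hE₁ : IsTopSet volume (Ioo a b) v (y - t) σ₁ E₁)
    (hE₂ : IsTopSet volume (Ioo a b) v (y + t) σ₂ E₂) :
    σ₁ - σ₂ ≤ 2 * t * (-(∫ t in E, v'' t) + C * (2 * t)) := by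
  have hs : s ∈ Icc σ₂ σ₁ :=
    ⟨hE.level_le_level hE₂ (by linarith) (by linarith),
      hE₁.level_le_level hE (by linarith) (by linarith)⟩
  obtain ⟨q, hq⟩ := hE₁.nonempty (by linarith)
  obtain ⟨p, hp, hpE₂⟩ := hE₂.nonempty_sdiff <| by
    rw [Real.volume_Ioo]; exact (ENNReal.ofReal_lt_ofReal_iff (by linarith)).2 htb
  have hab : a ≤ b := (hp.1.trans hp.2).le
  have hC0 : 0 ≤ C := (abs_nonneg _).trans (hC a (left_mem_Icc.2 hab))
  set N := Ioo a b ∩ v ⁻¹' Ioo σ₂ σ₁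
  have hN : volume.real N ≤ 2 * t :=
    (hE₁.measureReal_inter_preimage_Ioo_le hE₂ (by linarith) (by linarith)).trans_eq (by ring)
  have hgap := hv.sub_le_of_superlevel ha hb hC hs hp (hE₁.subset hq)
    (hE₂.le_of_notMem p hp hpE₂) (hE₁.le_of_mem q hq)
  have hnonpos := hv.setIntegral_superlevel_nonpos hab ha hb s
  rw [hv.setIntegral_topSet_eq hE, mul_comm (2 * t)]
  refine hgap.trans ?_
  have : 0 ≤ C * (2 * t) := by positivity
  gcongr
  linarith

end IsC2On

end Neumann

/-- The centred second difference of `F` at `p` in the direction `a`. -/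
def secondDiff {V : Type*} [AddCommGroup V] (F : V → ℝ) (a p : V) : ℝ :=
  F (p + a) + F (p - a) - 2 * F p

lemma le_of_sub_le_mul_sq {f : ℝ → ℝ} {a b K : ℝ} (hab : a ≤ b)
    (hf : ∀ s t, a ≤ s → s ≤ t → t ≤ b → f t - f s ≤ K * (t - s) ^ 2) : f b ≤ f a := by
  have hsubdiv (n : ℕ) : f b - f a ≤ K * (b - a) ^ 2 / (n + 1 : ℝ) := by
    set τ : ℕ → ℝ := fun k ↦ a + k * ((b - a) / (n + 1))
    have hτ_succ (k : ℕ) : τ (k + 1) - τ k = (b - a) / (n + 1) := by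
      simp only [τ]; push_cast; ring
    have hτ_mono : Monotone τ := monotone_nat_of_le_succ fun k ↦ by
      rw [← sub_nonneg, hτ_succ]
      have := sub_nonneg.2 hab
      positivity
    have hτ_last : τ (n + 1) = b := by
      simp only [τ]; push_cast; field_simp; ring
    have hτ_zero : τ 0 = a := by simp [τ]
    calc f b - f a
        = ∑ k ∈ Finset.range (n + 1), (f (τ (k + 1)) - f (τ k)) := by
          rw [Finset.sum_range_sub (fun k ↦ f (τ k)), hτ_last, hτ_zero]
      _ ≤ ∑ _k ∈ Finset.range (n + 1), K * ((b - a) / (n + 1)) ^ 2 := by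
          refine Finset.sum_le_sum fun k hk ↦ ?_
          rw [← hτ_succ k]
          exact hf _ _ (hτ_zero ▸ hτ_mono k.zero_le) (hτ_mono k.le_succ)
            (hτ_last ▸ hτ_mono (Finset.mem_range.1 hk))
      _ = K * (b - a) ^ 2 / (n + 1 : ℝ) := by
          rw [Finset.sum_const, Finset.card_range, nsmul_eq_mul]
          push_cast
          field_simp
  have hlim : Tendsto (fun n : ℕ ↦ K * (b - a) ^ 2 / (n + 1 : ℝ)) atTop (𝓝 0) :=
    tendsto_const_nhds.div_atTop
      (tendsto_atTop_add_const_right _ _ tendsto_natCast_atTop_atTop)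
  exact sub_nonpos.1 (ge_of_tendsto' hlim hsubdiv)

lemma IsTopSet.secondDiff_starOn_sub_le {α : Type*} [MeasurableSpace α] {μ : Measure α}
    {S E₁ E₂ F₁ F₂ : Set α} {v : α → ℝ} {y t t' σ₁ σ₂ r₁ r₂ : ℝ}
    (hE₁ : IsTopSet μ S v (y - t') σ₁ E₁) (hE₂ : IsTopSet μ S v (y + t') σ₂ E₂)
    (hF₁ : IsTopSet μ S v (y - t) r₁ F₁) (hF₂ : IsTopSet μ S v (y + t) r₂ F₂)
    (hv : IntegrableOn v S μ) (ht : 0 ≤ t) (htt' : t ≤ t') (ht'y : t' ≤ y) :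
    secondDiff (starOn μ S v) t y - secondDiff (starOn μ S v) t' y ≤ (σ₁ - σ₂) * (t' - t) := by
  have h₁ := hE₁.starOn_le hF₁ hv (by linarith) (by linarith)
  have h₂ := hE₂.starOn_le hF₂ hv (by linarith) (by linarith)
  simp only [secondDiff]
  linarith

lemma exists_isTopSet_Ioo {a b y : ℝ} {v : ℝ → ℝ} (hv : ContinuousOn v (Ioo a b)) (hy : 0 < y)
    (hyb : y < b - a) : ∃ s E, IsTopSet volume (Ioo a b) v y s E :=
  exists_isTopSet measurableSet_Ioo measure_Ioo_lt_top.ne hv.domRestrict.measurable hy <| by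
    rw [Real.volume_Ioo]; exact (ENNReal.ofReal_lt_ofReal_iff (hy.trans hyb)).2 hyb

/-- The level gap at `y ∓ t` is linear in `t`, and it bounds the derivative in `t` of
`-secondDiff (starOn …) t y`, which therefore grows at most quadratically. -/
lemma IsC2On.mul_le_secondDiff_starOn {a b C y h s : ℝ} {v v' v'' : ℝ → ℝ} {E : Set ℝ}
    (hv : IsC2On v v' v'' (Icc a b)) (ha : v' a = 0) (hb : v' b = 0)
    (hC : ∀ t ∈ Icc a b, |v'' t| ≤ C) (hh : 0 ≤ h) (hhy : h < y) (hhb : y + h < b - a)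
    (hE : IsTopSet volume (Ioo a b) v y s E) :
    h ^ 2 * ((∫ t in E, v'' t) - 2 * C * h) ≤ secondDiff (starOn volume (Ioo a b) v) h y := by
  set S := starOn volume (Ioo a b) v
  set K := -(∫ t in E, v'' t) + C * (2 * h)
  have hvI : IntegrableOn v (Ioo a b) :=
    (hv.continuousOn.integrableOn_compact isCompact_Icc).mono_set Ioo_subset_Icc_self
  have topSet {z : ℝ} := exists_isTopSet_Ioo (y := z) (hv.continuousOn.mono Ioo_subset_Icc_self)
  have hC0 : 0 ≤ C := (abs_nonneg _).trans (hC a (left_mem_Icc.2 (by linarith)))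
  have increment (t t' : ℝ) (ht : 0 ≤ t) (htt' : t ≤ t') (ht'h : t' ≤ h) :
      (-secondDiff S t' y - K * t' ^ 2) - (-secondDiff S t y - K * t ^ 2) ≤ K * (t' - t) ^ 2 := by
    obtain rfl | ht' := (ht.trans htt').eq_or_lt
    · simp [le_antisymm htt' ht]
    obtain ⟨σ₁, E₁, hE₁⟩ := topSet (z := y - t') (by linarith) (by linarith)
    obtain ⟨σ₂, E₂, hE₂⟩ := topSet (z := y + t') (by linarith) (by linarith)
    obtain ⟨r₁, F₁, hF₁⟩ := topSet (z := y - t) (by linarith) (by linarith)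
    obtain ⟨r₂, F₂, hF₂⟩ := topSet (z := y + t) (by linarith) (by linarith)
    have hconcave := hE₁.secondDiff_starOn_sub_le hE₂ hF₁ hF₂ hvI ht htt' (by linarith)
    have hlevel : σ₁ - σ₂ ≤ 2 * t' * K :=
      (hv.level_sub_level_le ha hb hC ht' (by linarith) (by linarith) hE hE₁ hE₂).trans <|
        mul_le_mul_of_nonneg_left (by simp only [K]; gcongr) (by linarith)
    linarith [mul_le_mul_of_nonneg_right hlevel (sub_nonneg.2 htt')]
  have := le_of_sub_le_mul_sq hh increment
  simp only [secondDiff, add_zero, sub_zero] at this ⊢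
  linarith

section SecondDerivatives

/-- The second derivative of `u` at `p` in the direction `e`; its sum over the coordinate
directions is `cylLap`. -/
def secondDeriv {V : Type*} [NormedAddCommGroup V] [NormedSpace ℝ V] (u : V → ℝ) (e p : V) : ℝ :=
  fderiv ℝ (fun q ↦ fderiv ℝ u q e) p e

variable {V : Type*} [NormedAddCommGroup V] [NormedSpace ℝ V] {u : V → ℝ} {p : V} {K : Set V}

lemma contDiffAt_fderiv_apply (hu : ContDiffAt ℝ 2 u p) (e : V) :
    ContDiffAt ℝ 1 (fun q ↦ fderiv ℝ u q e) p :=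
  (hu.fderiv_right (by norm_num)).clm_apply contDiffAt_const

lemma continuousAt_secondDeriv (hu : ContDiffAt ℝ 2 u p) (e : V) :
    ContinuousAt (secondDeriv u e) p :=
  ((contDiffAt_fderiv_apply hu e).fderiv_right (m := 0) (by norm_num)).continuousAt.clm_apply
    continuousAt_const

lemma isC2On_comp_line {I : Set ℝ} {e : V} (hu : ∀ t ∈ I, ContDiffAt ℝ 2 u (p + t • e)) :
    IsC2On (fun t ↦ u (p + t • e)) (fun t ↦ fderiv ℝ u (p + t • e) e)
      (fun t ↦ secondDeriv u e (p + t • e)) I := by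
  have hline (t : ℝ) : HasDerivAt (fun t : ℝ ↦ p + t • e) e t := by
    simpa using ((hasDerivAt_id t).smul_const e).const_add p
  refine ⟨fun t ht ↦ ?_, fun t ht ↦ ?_, fun t ht ↦ ContinuousAt.continuousWithinAt ?_⟩
  · exact ((hu t ht).differentiableAt (by norm_num)).hasFDerivAt.comp_hasDerivAt t (hline t)
  · exact ((contDiffAt_fderiv_apply (hu t ht) e).differentiableAt
      (by norm_num)).hasFDerivAt.comp_hasDerivAt t (hline t)
  · exact (continuousAt_secondDeriv (hu t ht) e).comp (f := fun t : ℝ ↦ p + t • e)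
      (hline t).continuousAt

lemma IsC2On.exists_secondDiff_eq {v v' v'' : ℝ → ℝ} {c h : ℝ} (hh : 0 < h)
    (hv : IsC2On v v' v'' (Icc (c - h) (c + h))) :
    ∃ ξ ∈ Icc (c - h) (c + h), secondDiff v h c = h ^ 2 * v'' ξ := by
  have hφ (t : ℝ) (ht : t ∈ Icc 0 h) :
      HasDerivAt (fun t ↦ secondDiff v t c) (v' (c + t) - v' (c - t)) t := by
    have hadd := (hv.hasDerivAt (c + t) ⟨by linarith [ht.1], by linarith [ht.2]⟩).comp_const_add c t
    have hsub := (hv.hasDerivAt (c - t) ⟨by linarith [ht.2], by linarith [ht.1]⟩).comp_const_sub c t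
    simpa [secondDiff, sub_eq_add_neg] using (hadd.add hsub).sub_const (2 * v c)
  obtain ⟨τ, hτ, hcauchy⟩ := exists_ratio_hasDerivAt_eq_ratio_slope (fun t ↦ secondDiff v t c) _ hh
    (HasDerivAt.continuousOn hφ) (fun t ht ↦ hφ t (Ioo_subset_Icc_self ht)) (fun t ↦ t ^ 2) _
    (by fun_prop) (fun t _ ↦ by simpa using hasDerivAt_pow 2 t)
  have hsub : Icc (c - τ) (c + τ) ⊆ Icc (c - h) (c + h) :=
    Icc_subset_Icc (by linarith [hτ.2]) (by linarith [hτ.2])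
  obtain ⟨ξ, hξ, hmvt⟩ := exists_hasDerivAt_eq_slope v' v'' (by linarith [hτ.1])
    (hv.continuousOn_deriv.mono hsub)
    (fun t ht ↦ hv.hasDerivAt_deriv t (hsub (Ioo_subset_Icc_self ht)))
  refine ⟨ξ, hsub (Ioo_subset_Icc_self hξ), ?_⟩
  have hτ0 : τ ≠ 0 := hτ.1.ne'
  rw [show c + τ - (c - τ) = 2 * τ by ring, eq_div_iff (by positivity)] at hmvt
  rw [← hmvt] at hcauchy
  refine mul_right_cancel₀ (b := 2 * τ) (by positivity) ?_
  simp only [secondDiff, add_zero, sub_zero] at hcauchy ⊢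
  linarith

lemma exists_secondDiff_smul_eq {e : V} {h : ℝ} (hh : 0 < h)
    (hu : ∀ t ∈ Icc (-h) h, ContDiffAt ℝ 2 u (p + t • e)) :
    ∃ ξ ∈ Icc (-h) h, secondDiff u (h • e) p = h ^ 2 * secondDeriv u e (p + ξ • e) := by
  obtain ⟨ξ, hξ, h_eq⟩ := IsC2On.exists_secondDiff_eq (c := 0) hh
    (isC2On_comp_line (p := p) (e := e) (by simpa using hu))
  exact ⟨ξ, by simpa using hξ, by simpa [secondDiff, sub_eq_add_neg] using h_eq⟩

lemma eventually_abs_secondDiff_sub_le (hK : IsCompact K) (hu : ∀ p ∈ K, ContDiffAt ℝ 2 u p)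
    (e : V) {ε : ℝ} (hε : 0 < ε) :
    ∀ᶠ h in 𝓝[>] (0 : ℝ), ∀ p ∈ K,
      |secondDiff u (h • e) p - h ^ 2 * secondDeriv u e p| ≤ h ^ 2 * ε := by
  suffices ∀ᶠ h in 𝓝 (0 : ℝ), ∀ p ∈ K, 0 < h →
      |secondDiff u (h • e) p - h ^ 2 * secondDeriv u e p| ≤ h ^ 2 * ε by
    filter_upwards [this.filter_mono nhdsWithin_le_nhds, self_mem_nhdsWithin] with h hK hh p hp
    exact hK p hp hh
  refine hK.eventually_forall_of_forall_eventually fun p hp ↦ ?_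
  obtain ⟨δ, hδ, hball⟩ := Metric.eventually_nhds_iff_ball.1 <|
    ((hu p hp).eventually (by norm_num)).and <|
      (continuousAt_secondDeriv (hu p hp) e).eventually (Metric.ball_mem_nhds _ (half_pos hε))
  have hline : Tendsto (fun z : ℝ × V ↦ |z.1| * ‖e‖ + dist z.2 p) (𝓝 (0, p)) (𝓝 0) :=
    Continuous.tendsto' (by fun_prop) _ _ (by simp)
  filter_upwards [hline.eventually (gt_mem_nhds hδ)] with ⟨h, q⟩ hq hh
  have hmem (t : ℝ) (ht : t ∈ Icc (-h) h) : q + t • e ∈ Metric.ball p δ := by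
    refine lt_of_le_of_lt ?_ hq
    calc dist (q + t • e) p
        ≤ dist (q + t • e) q + dist q p := dist_triangle _ _ _
      _ = |t| * ‖e‖ + dist q p := by simp [norm_smul]
      _ ≤ |h| * ‖e‖ + dist q p := by
          have := (abs_le.2 ht).trans (le_abs_self h)
          gcongr ?_ * _ + _
  obtain ⟨ξ, hξ, h_eq⟩ := exists_secondDiff_smul_eq hh fun t ht ↦ (hball _ (hmem t ht)).1
  have hξp := abs_lt.1 (hball _ (hmem ξ hξ)).2
  have hqp := abs_lt.1 (hball q (by simpa using hmem 0 ⟨by linarith, hh.le⟩)).2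
  rw [h_eq, ← mul_sub, abs_mul, abs_of_nonneg (sq_nonneg h)]
  gcongr
  exact abs_le.2 ⟨by linarith, by linarith⟩

lemma tendstoUniformlyOn_inv_sq_mul_secondDiff (hK : IsCompact K)
    (hu : ∀ p ∈ K, ContDiffAt ℝ 2 u p) (e : V) :
    TendstoUniformlyOn (fun (h : ℝ) p ↦ (h ^ 2)⁻¹ * secondDiff u (h • e) p) (secondDeriv u e)
      (𝓝[>] 0) K := by
  refine Metric.tendstoUniformlyOn_iff.2 fun ε hε ↦ ?_
  filter_upwards [self_mem_nhdsWithin,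
    eventually_abs_secondDiff_sub_le hK hu e (half_pos hε)] with h (hh : 0 < h) hdiff p hp
  have hfactor : (h ^ 2)⁻¹ * secondDiff u (h • e) p - secondDeriv u e p =
      (h ^ 2)⁻¹ * (secondDiff u (h • e) p - h ^ 2 * secondDeriv u e p) := by
    field_simp
  rw [dist_comm, Real.dist_eq, hfactor, abs_mul, abs_of_pos (by positivity),
    inv_mul_lt_iff₀ (by positivity)]
  exact (hdiff p hp).trans_lt (by gcongr; exact half_lt_self hε)

lemma eventually_forall_add_mem_sub_mem {V : Type*} [TopologicalSpace V] [AddCommGroup V]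
    [IsTopologicalAddGroup V] {K O : Set V} (hK : IsCompact K) (hO : IsOpen O) (hKO : K ⊆ O) :
    ∀ᶠ a in 𝓝 (0 : V), ∀ p ∈ K, p + a ∈ O ∧ p - a ∈ O := by
  refine hK.eventually_forall_of_forall_eventually fun p hp ↦ ?_
  have hlim : Tendsto (fun z : V × V ↦ (z.2 + z.1, z.2 - z.1)) (𝓝 (0, p)) (𝓝 (p, p)) :=
    Continuous.tendsto' (by fun_prop) _ _ (by simp)
  exact hlim (prod_mem_nhds (hO.mem_nhds (hKO hp)) (hO.mem_nhds (hKO hp)))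

lemma tendsto_smul_nhdsGT_zero (e : V) :
    Tendsto (fun h : ℝ ↦ h • e) (𝓝[>] 0) (𝓝 0) :=
  (Continuous.tendsto' (by fun_prop) 0 0 (by simp)).mono_left nhdsWithin_le_nhds

end SecondDerivatives

section StarFun

variable {m : ℕ} {D : Set (EuclideanSpace ℝ (Fin m))} {K : Set (Cyl m)} {ℓ ε : ℝ}
  {u g : Cyl m → ℝ}

lemma continuousOn_slice {I : Set ℝ} (hg : ContinuousOn g (D ×ˢ I)) {x : EuclideanSpace ℝ (Fin m)}
    (hx : x ∈ D) : ContinuousOn (fun t ↦ g (x, t)) I :=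
  hg.comp (by fun_prop) fun _ ht ↦ ⟨hx, ht⟩

lemma starFun_eq_starOn (ℓ : ℝ) (u : Cyl m → ℝ) (p : Cyl m) :
    starFun ℓ u p = starOn volume (Ioo 0 ℓ) (fun t ↦ u (p.1, t)) p.2 :=
  rfl

lemma continuousOn_secondDiff_slice {I : Set ℝ} (hg : ContinuousOn g (D ×ˢ I))
    {x a : EuclideanSpace ℝ (Fin m)} (hx : x ∈ D) (hxa : x + a ∈ D) (hxa' : x - a ∈ D) :
    ContinuousOn (fun t ↦ secondDiff g (a, 0) (x, t)) I := by
  simp only [secondDiff, Prod.mk_add_mk, Prod.mk_sub_mk, add_zero, sub_zero]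
  exact ((continuousOn_slice hg hxa).add (continuousOn_slice hg hxa')).sub
    (continuousOn_const.mul (continuousOn_slice hg hx))

/-- The top set `E` of the slice over `x` is a competitor on the slices over `x ± a`. -/
lemma setIntegral_secondDiff_le_secondDiff_starFun (hg : ContinuousOn g (D ×ˢ Icc 0 ℓ))
    {x a : EuclideanSpace ℝ (Fin m)} (hx : x ∈ D) (hxa : x + a ∈ D) (hxa' : x - a ∈ D) {y s : ℝ}
    (hy : y ∈ Ioo 0 ℓ) {E : Set ℝ} (hE : IsTopSet volume (Ioo 0 ℓ) (fun t ↦ g (x, t)) y s E) :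
    ∫ t in E, secondDiff g (a, 0) (x, t) ≤ secondDiff (starFun ℓ g) (a, 0) (x, y) := by
  have hint {x' : EuclideanSpace ℝ (Fin m)} (hx' : x' ∈ D) :
      IntegrableOn (fun t ↦ g (x', t)) (Ioo 0 ℓ) :=
    ((continuousOn_slice hg hx').integrableOn_compact isCompact_Icc).mono_set Ioo_subset_Icc_self
  have hintE {x' : EuclideanSpace ℝ (Fin m)} (hx' : x' ∈ D) := (hint hx').mono_set hE.subset
  have competitor {x' : EuclideanSpace ℝ (Fin m)} (hx' : x' ∈ D) :
      ∫ t in E, g (x', t) ≤ starFun ℓ g (x', y) := by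
    obtain ⟨r, F, hF⟩ := exists_isTopSet_Ioo
      ((continuousOn_slice hg hx').mono Ioo_subset_Icc_self) hy.1 (by simpa using hy.2)
    exact hF.setIntegral_le_starOn (hint hx') hE.subset hE.measurableSet hE.measure_eq
  have hsplit : ∫ t in E, secondDiff g (a, 0) (x, t) =
      (∫ t in E, g (x + a, t)) + (∫ t in E, g (x - a, t)) - 2 * ∫ t in E, g (x, t) := by
    simp only [secondDiff, Prod.mk_add_mk, Prod.mk_sub_mk, add_zero, sub_zero]
    rw [integral_sub ((hintE hxa).fun_add (hintE hxa')) ((hintE hx).const_mul 2),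
      integral_add (hintE hxa) (hintE hxa'), integral_const_mul]
  rw [hsplit, ← hE.starOn_eq (hint hx)]
  simp only [secondDiff, Prod.mk_add_mk, Prod.mk_sub_mk, add_zero, sub_zero]
  linarith [competitor hxa, competitor hxa', starFun_eq_starOn ℓ g (x, y)]

lemma setIntegral_le_secondDiff_starFun (hg : ContinuousOn g (D ×ˢ Icc 0 ℓ))
    {x a : EuclideanSpace ℝ (Fin m)} (hx : x ∈ D) (hxa : x + a ∈ D) (hxa' : x - a ∈ D) {y s : ℝ}
    (hy : y ∈ Ioo 0 ℓ) {E : Set ℝ} (hE : IsTopSet volume (Ioo 0 ℓ) (fun t ↦ g (x, t)) y s E)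
    {w : ℝ → ℝ} (hw : IntegrableOn w E) (hwg : ∀ t ∈ Icc 0 ℓ, w t ≤ secondDiff g (a, 0) (x, t)) :
    ∫ t in E, w t ≤ secondDiff (starFun ℓ g) (a, 0) (x, y) :=
  have hEI : E ⊆ Icc 0 ℓ := hE.subset.trans Ioo_subset_Icc_self
  have hdiff_int : IntegrableOn (fun t ↦ secondDiff g (a, 0) (x, t)) E :=
    ((continuousOn_secondDiff_slice hg hx hxa hxa').integrableOn_compact isCompact_Icc).mono_set hEI
  (setIntegral_mono_on hw hdiff_int hE.measurableSet fun t ht ↦ hwg t (hEI ht)).trans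
    (setIntegral_secondDiff_le_secondDiff_starFun hg hx hxa hxa' hy hE)

lemma eventually_mul_le_secondDiff_starFun_horizontal (hD : IsOpen D) (hℓ : 0 < ℓ)
    (hu : ∀ p ∈ D ×ˢ Icc 0 ℓ, ContDiffAt ℝ 2 u p) (hK : IsCompact K) (hKΩ : K ⊆ D ×ˢ Ioo 0 ℓ)
    (e : EuclideanSpace ℝ (Fin m)) (hε : 0 < ε) :
    ∀ᶠ h in 𝓝[>] (0 : ℝ), ∀ p ∈ K, ∀ s E,
      IsTopSet volume (Ioo 0 ℓ) (fun t ↦ u (p.1, t)) p.2 s E →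
      h ^ 2 * ((∫ t in E, secondDeriv u (e, 0) (p.1, t)) - ε) ≤
        secondDiff (starFun ℓ u) (h • (e, 0)) p := by
  have hL : IsCompact (Prod.fst '' K) := hK.image continuous_fst
  have hLD : Prod.fst '' K ⊆ D := image_subset_iff.2 fun p hp ↦ (hKΩ hp).1
  have hdiff := eventually_abs_secondDiff_sub_le (hL.prod isCompact_Icc)
    (fun p hp ↦ hu p ⟨hLD hp.1, hp.2⟩) (e, 0) (div_pos hε hℓ)
  filter_upwards [hdiff, (tendsto_smul_nhdsGT_zero e).eventually
    (eventually_forall_add_mem_sub_mem hL hD hLD)] with h hdiff hshift ⟨x, y⟩ hp s E hE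
  have hx : x ∈ Prod.fst '' K := ⟨_, hp, rfl⟩
  have hy := (hKΩ hp).2
  obtain ⟨hxh, hxh'⟩ := hshift x hx
  have hu_cont : ContinuousOn u (D ×ˢ Icc 0 ℓ) := fun p hp ↦
    (hu p hp).continuousAt.continuousWithinAt
  have hu''_cont : ContinuousOn (secondDeriv u (e, 0)) (D ×ˢ Icc 0 ℓ) := fun p hp ↦
    (continuousAt_secondDeriv (hu p hp) _).continuousWithinAt
  have hu''_int : IntegrableOn (fun t ↦ secondDeriv u (e, 0) (x, t)) E :=
    ((continuousOn_slice hu''_cont (hLD hx)).integrableOn_compact isCompact_Icc).mono_set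
      (hE.subset.trans Ioo_subset_Icc_self)
  have hconst : IntegrableOn (fun _ ↦ ε / ℓ) E := integrableOn_const hE.measure_ne_top
  simp only [Prod.smul_mk, smul_zero] at hdiff ⊢
  calc h ^ 2 * ((∫ t in E, secondDeriv u (e, 0) (x, t)) - ε)
      ≤ h ^ 2 * ((∫ t in E, secondDeriv u (e, 0) (x, t)) - y * (ε / ℓ)) := by
        gcongr
        rw [mul_div_left_comm]
        exact mul_le_of_le_one_right hε.le ((div_le_one hℓ).2 hy.2.le)
    _ = ∫ t in E, h ^ 2 * (secondDeriv u (e, 0) (x, t) - ε / ℓ) := by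
        rw [integral_const_mul, integral_sub hu''_int hconst, setIntegral_const,
          hE.measureReal_eq hy.1.le, smul_eq_mul]
    _ ≤ secondDiff (starFun ℓ u) (h • e, 0) (x, y) :=
        setIntegral_le_secondDiff_starFun hu_cont (hLD hx) hxh hxh' hy hE
          ((hu''_int.sub hconst).const_mul _)
          fun t ht ↦ by linarith [abs_le.1 (hdiff (x, t) ⟨hx, ht⟩)]

lemma eventually_mul_le_secondDiff_starFun_vertical
    (hu : ∀ p ∈ D ×ˢ Icc 0 ℓ, ContDiffAt ℝ 2 u p)
    (hu0 : ∀ x ∈ D, fderiv ℝ u (x, 0) (0, 1) = 0) (huℓ : ∀ x ∈ D, fderiv ℝ u (x, ℓ) (0, 1) = 0)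
    (hK : IsCompact K) (hKΩ : K ⊆ D ×ˢ Ioo 0 ℓ) (hε : 0 < ε) :
    ∀ᶠ h in 𝓝[>] (0 : ℝ), ∀ p ∈ K, ∀ s E,
      IsTopSet volume (Ioo 0 ℓ) (fun t ↦ u (p.1, t)) p.2 s E →
      h ^ 2 * ((∫ t in E, secondDeriv u (0, 1) (p.1, t)) - ε) ≤
        secondDiff (starFun ℓ u) (h • (0, 1)) p := by
  have hL : IsCompact (Prod.fst '' K) := hK.image continuous_fst
  have hLD : Prod.fst '' K ⊆ D := image_subset_iff.2 fun p hp ↦ (hKΩ hp).1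
  obtain ⟨C, hC⟩ := (hL.prod (isCompact_Icc (a := 0) (b := ℓ))).exists_bound_of_continuousOn
    fun p hp ↦ (continuousAt_secondDeriv (hu p ⟨hLD hp.1, hp.2⟩) (0, 1)).continuousWithinAt
  have hC_small : ∀ᶠ h in 𝓝 (0 : ℝ), 2 * C * h < ε :=
    (Continuous.tendsto' (by fun_prop) 0 0 (by simp)).eventually (gt_mem_nhds hε)
  have hrange : ∀ᶠ h in 𝓝 (0 : ℝ), ∀ p ∈ K, h < p.2 ∧ p.2 + h < ℓ :=
    hK.eventually_forall_of_forall_eventually fun p hp ↦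
      ((continuous_fst.tendsto (0, p)).eventually_lt
        ((continuous_snd.comp continuous_snd).tendsto (0, p)) (hKΩ hp).2.1).and
      ((Continuous.tendsto' (f := fun z : ℝ × Cyl m ↦ z.2.2 + z.1) (by fun_prop) (0, p) p.2
        (by simp)).eventually (gt_mem_nhds (hKΩ hp).2.2))
  filter_upwards [hC_small.filter_mono nhdsWithin_le_nhds, hrange.filter_mono nhdsWithin_le_nhds,
    self_mem_nhdsWithin] with h hCh hh hh0 ⟨x, y⟩ hp s E hE
  have hx : x ∈ Prod.fst '' K := ⟨_, hp, rfl⟩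
  obtain ⟨hhy, hhℓ⟩ := hh _ hp
  have hv : IsC2On (fun t ↦ u (x, t)) (fun t ↦ fderiv ℝ u (x, t) (0, 1))
      (fun t ↦ secondDeriv u (0, 1) (x, t)) (Icc 0 ℓ) := by
    simpa using isC2On_comp_line (u := u) (p := (x, 0)) (e := (0, 1)) (I := Icc 0 ℓ)
      (by simpa using fun t ht0 htℓ ↦ hu (x, t) ⟨hLD hx, ht0, htℓ⟩)
  calc h ^ 2 * ((∫ t in E, secondDeriv u (0, 1) (x, t)) - ε)
      ≤ h ^ 2 * ((∫ t in E, secondDeriv u (0, 1) (x, t)) - 2 * C * h) := by gcongr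
    _ ≤ secondDiff (starOn volume (Ioo 0 ℓ) fun t ↦ u (x, t)) h y :=
        hv.mul_le_secondDiff_starOn (hu0 x (hLD hx)) (huℓ x (hLD hx))
          (fun t ht ↦ hC (x, t) ⟨hx, ht⟩) (le_of_lt hh0) hhy (by simpa using hhℓ) hE
    _ = secondDiff (starFun ℓ u) (h • (0, 1)) (x, y) := by
        simp [secondDiff, starFun_eq_starOn]

/-- The directions summed over in `cylLap`, with `none` for the vertical one. -/
def cylBasis : Option (Fin m) → Cyl m
  | none => (0, 1)
  | some i => (EuclideanSpace.single i 1, 0)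

lemma cylLap_eq_sum (u : Cyl m → ℝ) (p : Cyl m) :
    cylLap u p = ∑ o, secondDeriv u (cylBasis o) p := by
  rw [Fintype.sum_option, add_comm]
  rfl

lemma eventually_mul_le_secondDiff_starFun_cylBasis (hD : IsOpen D) (hℓ : 0 < ℓ)
    (hu : ∀ p ∈ D ×ˢ Icc 0 ℓ, ContDiffAt ℝ 2 u p)
    (hu0 : ∀ x ∈ D, fderiv ℝ u (x, 0) (0, 1) = 0) (huℓ : ∀ x ∈ D, fderiv ℝ u (x, ℓ) (0, 1) = 0)
    (hK : IsCompact K) (hKΩ : K ⊆ D ×ˢ Ioo 0 ℓ) (hε : 0 < ε) :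
    ∀ o, ∀ᶠ h in 𝓝[>] (0 : ℝ), ∀ p ∈ K, ∀ s E,
      IsTopSet volume (Ioo 0 ℓ) (fun t ↦ u (p.1, t)) p.2 s E →
      h ^ 2 * ((∫ t in E, secondDeriv u (cylBasis o) (p.1, t)) - ε) ≤
        secondDiff (starFun ℓ u) (h • cylBasis o) p
  | none => eventually_mul_le_secondDiff_starFun_vertical hu hu0 huℓ hK hKΩ hε
  | some _ => eventually_mul_le_secondDiff_starFun_horizontal hD hℓ hu hK hKΩ _ hε

lemma continuousOn_cylLap {A : Set (Cyl m)} (hu : ∀ p ∈ A, ContDiffAt ℝ 2 u p) :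
    ContinuousOn (cylLap u) A := by
  simp only [funext (cylLap_eq_sum u)]
  exact continuousOn_finsetSum _ fun o _ p hp ↦
    (continuousAt_secondDeriv (hu p hp) _).continuousWithinAt

lemma setIntegral_cylLap_eq_sum (hu : ∀ p ∈ D ×ˢ Icc 0 ℓ, ContDiffAt ℝ 2 u p)
    {x : EuclideanSpace ℝ (Fin m)} (hx : x ∈ D) {E : Set ℝ} (hE : E ⊆ Icc 0 ℓ) :
    ∫ t in E, cylLap u (x, t) = ∑ o, ∫ t in E, secondDeriv u (cylBasis o) (x, t) := by
  simp only [cylLap_eq_sum]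
  refine integral_finsetSum _ fun o _ ↦ ?_
  have hcont : ContinuousOn (secondDeriv u (cylBasis o)) (D ×ˢ Icc 0 ℓ) := fun p hp ↦
    (continuousAt_secondDeriv (hu p hp) _).continuousWithinAt
  exact ((continuousOn_slice hcont hx).integrableOn_compact isCompact_Icc).mono_set hE

lemma neg_setIntegral_le_starFun_neg (hg : ContinuousOn g (D ×ˢ Icc 0 ℓ))
    {x : EuclideanSpace ℝ (Fin m)} (hx : x ∈ D) {y : ℝ} (hy : y ∈ Ioo 0 ℓ) {E : Set ℝ}
    (hEℓ : E ⊆ Ioo 0 ℓ) (hE : MeasurableSet E) (hEy : volume E = ENNReal.ofReal y) :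
    -∫ t in E, g (x, t) ≤ starFun ℓ (fun q ↦ -g q) (x, y) := by
  have hcont := continuousOn_slice hg.neg hx
  obtain ⟨r, F, hF⟩ := exists_isTopSet_Ioo (hcont.mono Ioo_subset_Icc_self) hy.1
    (by simpa using hy.2)
  rw [← integral_neg]
  exact hF.setIntegral_le_starOn
    ((hcont.integrableOn_compact isCompact_Icc).mono_set Ioo_subset_Icc_self) hEℓ hE hEy

lemma eventually_mul_le_sum_secondDiff_starFun (hD : IsOpen D) (hℓ : 0 < ℓ)
    (hu : ∀ p ∈ D ×ˢ Icc 0 ℓ, ContDiffAt ℝ 2 u p)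
    (hu0 : ∀ x ∈ D, fderiv ℝ u (x, 0) (0, 1) = 0) (huℓ : ∀ x ∈ D, fderiv ℝ u (x, ℓ) (0, 1) = 0)
    (hK : IsCompact K) (hKΩ : K ⊆ D ×ˢ Ioo 0 ℓ) (hε : 0 < ε) :
    ∀ᶠ h in 𝓝[>] (0 : ℝ), ∀ p ∈ K,
      h ^ 2 * (-starFun ℓ (fun q ↦ -cylLap u q) p - ε) ≤
        ∑ o, secondDiff (starFun ℓ u) (h • cylBasis o) p := by
  have hcard : (0 : ℝ) < Fintype.card (Option (Fin m)) := by exact_mod_cast Fintype.card_pos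
  filter_upwards [eventually_all.2 (eventually_mul_le_secondDiff_starFun_cylBasis hD hℓ hu hu0 huℓ
    hK hKΩ (div_pos hε hcard))] with h hh ⟨x, y⟩ hp
  obtain ⟨hx, hy⟩ := hKΩ hp
  have hu_cont : ContinuousOn u (D ×ˢ Icc 0 ℓ) := fun p hp ↦
    (hu p hp).continuousAt.continuousWithinAt
  obtain ⟨s, E, hE⟩ := exists_isTopSet_Ioo
    ((continuousOn_slice hu_cont hx).mono Ioo_subset_Icc_self) hy.1 (by simpa using hy.2)
  calc h ^ 2 * (-starFun ℓ (fun q ↦ -cylLap u q) (x, y) - ε)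
      ≤ h ^ 2 * ((∫ t in E, cylLap u (x, t)) - ε) := by
        gcongr
        exact neg_le.1 (neg_setIntegral_le_starFun_neg (continuousOn_cylLap hu) hx hy hE.subset
          hE.measurableSet hE.measure_eq)
    _ = ∑ o, h ^ 2 * ((∫ t in E, secondDeriv u (cylBasis o) (x, t)) -
          ε / Fintype.card (Option (Fin m))) := by
        rw [setIntegral_cylLap_eq_sum hu hx (hE.subset.trans Ioo_subset_Icc_self),
          ← Finset.mul_sum, Finset.sum_sub_distrib, Finset.sum_const, Finset.card_univ,
          nsmul_eq_mul, mul_div_cancel₀ _ hcard.ne']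
    _ ≤ ∑ o, secondDiff (starFun ℓ u) (h • cylBasis o) (x, y) :=
        Finset.sum_le_sum fun o _ ↦ hh o (x, y) hp s E hE

lemma continuousOn_starFun (hg : ContinuousOn g (D ×ˢ Icc 0 ℓ)) :
    ContinuousOn (starFun ℓ g) (D ×ˢ Ioo 0 ℓ) := by
  rintro ⟨x, y⟩ ⟨hx, hy⟩
  have hslice {x' : EuclideanSpace ℝ (Fin m)} (hx' : x' ∈ D) := continuousOn_slice hg hx'
  have hint {x' : EuclideanSpace ℝ (Fin m)} (hx' : x' ∈ D) :
      IntegrableOn (fun t ↦ g (x', t)) (Ioo 0 ℓ) :=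
    ((hslice hx').integrableOn_compact isCompact_Icc).mono_set Ioo_subset_Icc_self
  have topSet {x' : EuclideanSpace ℝ (Fin m)} (hx' : x' ∈ D) {z : ℝ} (hz : z ∈ Ioo 0 ℓ) :=
    exists_isTopSet_Ioo ((hslice hx').mono Ioo_subset_Icc_self) hz.1 (by simpa using hz.2)
  obtain ⟨M, hM⟩ := isCompact_Icc.exists_bound_of_continuousOn (hslice hx)
  have hℓ : 0 < ℓ := hy.1.trans hy.2
  have ofReal_lt {z : ℝ} (hz : z ∈ Ioo 0 ℓ) : ENNReal.ofReal z < volume (Ioo 0 ℓ) := by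
    simpa using (ENNReal.ofReal_lt_ofReal_iff hℓ).2 hz.2
  refine Metric.tendsto_nhds.2 fun ε hε ↦ ?_
  obtain ⟨U, hU, hgU⟩ := isCompact_Icc.mem_uniformity_of_prod (f := Function.curry g) hg hx
    (Metric.dist_mem_uniformity (div_pos hε (mul_pos two_pos hℓ)))
  have hM_small : ∀ᶠ y' in 𝓝[Ioo 0 ℓ] y, M * |y' - y| < ε / 2 :=
    (Continuous.continuousWithinAt (by fun_prop)).eventually_lt_const (by simpa using hε)
  rw [nhdsWithin_prod_eq]
  filter_upwards [prod_mem_prod (inter_mem hU self_mem_nhdsWithin)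
    (inter_mem hM_small self_mem_nhdsWithin)] with ⟨x', y'⟩ ⟨⟨hx'U, hx'⟩, hMy', hy'⟩
  obtain ⟨s, E, hE⟩ := topSet hx hy
  obtain ⟨r, F, hF⟩ := topSet hx hy'
  obtain ⟨r', F', hF'⟩ := topSet hx' hy'
  have hhorizontal := hF'.abs_starOn_sub_starOn_le hF (hint hx') (hint hx) hy'.1.le
    fun t ht ↦ (hgU x' hx'U t (Ioo_subset_Icc_self ht)).le
  have hvertical := hE.abs_starOn_sub_le hF (hint hx) (fun t ht ↦ hM t (Ioo_subset_Icc_self ht))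
    hy.1 hy'.1 (ofReal_lt hy) (ofReal_lt hy')
  calc dist (starFun ℓ g (x', y')) (starFun ℓ g (x, y))
      ≤ dist (starFun ℓ g (x', y')) (starFun ℓ g (x, y')) +
        dist (starFun ℓ g (x, y')) (starFun ℓ g (x, y)) := dist_triangle _ _ _
    _ ≤ ε / (2 * ℓ) * y' + M * |y' - y| := add_le_add hhorizontal hvertical
    _ < ε / 2 + ε / 2 := by
        refine add_lt_add_of_le_of_lt ?_ hMy'
        rw [div_mul_eq_mul_div, div_le_div_iff₀ (by positivity) two_pos]
        nlinarith [hy'.2]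
    _ = ε := add_halves ε

end StarFun

section WeakLaplacian

lemma integrable_mul_of_support_subset {X : Type*} [TopologicalSpace X] [T2Space X]
    [MeasurableSpace X] [OpensMeasurableSpace X] {μ : Measure X} [IsFiniteMeasureOnCompacts μ]
    {K : Set X} {F g : X → ℝ} (hK : IsCompact K) (hF : ContinuousOn F K) (hg : Continuous g)
    (hgK : Function.support g ⊆ K) : Integrable (fun p ↦ F p * g p) μ :=
  (integrableOn_iff_integrable_of_support_subset
    ((Function.support_mul_subset_right _ _).trans hgK)).1
    ((hF.mul hg.continuousOn).integrableOn_compact hK)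

lemma tendsto_integral_mul_of_tendstoUniformlyOn {X ι : Type*} [TopologicalSpace X] [T2Space X]
    [MeasurableSpace X] [OpensMeasurableSpace X] {μ : Measure X} [IsFiniteMeasureOnCompacts μ]
    {K : Set X} {F g : X → ℝ} {φ : ι → X → ℝ} {l : Filter ι} (hK : IsCompact K)
    (hF : ContinuousOn F K) (hφ : ∀ i, Continuous (φ i))
    (hφK : ∀ᶠ i in l, Function.support (φ i) ⊆ K) (hg : Continuous g)
    (hgK : Function.support g ⊆ K) (hlim : TendstoUniformlyOn φ g l K) :
    Tendsto (fun i ↦ ∫ p, F p * φ i p ∂μ) l (𝓝 (∫ p, F p * g p ∂μ)) := by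
  refine Metric.tendsto_nhds.2 fun ε hε ↦ ?_
  set δ := ε / ((∫ p in K, |F p| ∂μ) + 1)
  filter_upwards [hφK, Metric.tendstoUniformlyOn_iff.1 hlim δ (by positivity)] with i hi hδ
  calc dist (∫ p, F p * φ i p ∂μ) (∫ p, F p * g p ∂μ)
      = ‖∫ p in K, F p * (φ i p - g p) ∂μ‖ := by
        rw [dist_eq_norm, ← integral_sub (integrable_mul_of_support_subset hK hF (hφ i) hi)
          (integrable_mul_of_support_subset hK hF hg hgK),
          setIntegral_eq_integral_of_forall_compl_eq_zero fun p hp ↦ by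
            simp [Function.support_subset_iff'.1 hi p hp, Function.support_subset_iff'.1 hgK p hp]]
        simp only [mul_sub]
    _ ≤ ∫ p in K, |F p| * δ ∂μ := by
        refine norm_integral_le_of_norm_le ((hF.abs.integrableOn_compact hK).mul_const δ) ?_
        filter_upwards [ae_restrict_mem hK.measurableSet] with p hp
        rw [norm_mul, Real.norm_eq_abs, ← dist_eq_norm']
        exact mul_le_mul_of_nonneg_left (hδ p hp).le (abs_nonneg _)
    _ < ε := by
        rw [integral_mul_const, mul_div_left_comm]
        exact mul_lt_of_lt_one_right hε ((div_lt_one (by positivity)).2 (lt_add_one _))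

section Translation

variable {V : Type*} [AddCommGroup V] [MeasurableSpace V] [MeasurableAdd V]
  {μ : Measure V} [μ.IsAddRightInvariant] {F G : V → ℝ} {a : V}
  (h0 : Integrable (fun p ↦ F p * G p) μ) (hadd : Integrable (fun p ↦ F p * G (p + a)) μ)
  (hsub : Integrable (fun p ↦ F p * G (p - a)) μ)

include h0 hadd hsub

lemma integrable_secondDiff_mul : Integrable (fun p ↦ secondDiff F a p * G p) μ := by
  refine (((hsub.comp_add_right a).add (hadd.comp_sub_right a)).sub (h0.const_mul 2)).congr
    (.of_forall fun p ↦ ?_)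
  simp only [secondDiff, Pi.add_apply, Pi.sub_apply, add_sub_cancel_right, sub_add_cancel]
  ring

lemma integral_secondDiff_mul :
    ∫ p, secondDiff F a p * G p ∂μ = ∫ p, F p * secondDiff G a p ∂μ := by
  have hsub' := hsub.comp_add_right a
  have hadd' := hadd.comp_sub_right a
  calc ∫ p, secondDiff F a p * G p ∂μ
      = ∫ p, F (p + a) * G (p + a - a) + F (p - a) * G (p - a + a) - 2 * (F p * G p) ∂μ := by
        congr with p
        simp only [secondDiff, add_sub_cancel_right, sub_add_cancel]
        ring
    _ = (∫ p, F p * G (p - a) ∂μ) + (∫ p, F p * G (p + a) ∂μ) - 2 * ∫ p, F p * G p ∂μ := by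
        rw [integral_sub (hsub'.fun_add hadd') (h0.const_mul 2), integral_add hsub' hadd',
          integral_const_mul, integral_add_right_eq_self (fun p ↦ F p * G (p - a)),
          integral_sub_right_eq_self (fun p ↦ F p * G (p + a))]
    _ = ∫ p, F p * G (p + a) + F p * G (p - a) - 2 * (F p * G p) ∂μ := by
        rw [integral_sub (hadd.fun_add hsub) (h0.const_mul 2), integral_add hadd hsub,
          integral_const_mul, add_comm (∫ p, F p * G (p - a) ∂μ)]
    _ = ∫ p, F p * secondDiff G a p ∂μ := by
        congr with p
        simp only [secondDiff]
        ring

end Translation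

section Support

variable {V : Type*} [NormedAddCommGroup V] {G : V → ℝ} {K : Set V}

lemma eventually_support_comp_add_subset (hGc : HasCompactSupport G)
    (hGK : tsupport G ⊆ interior K) :
    ∀ᶠ a in 𝓝 (0 : V), Function.support (fun p ↦ G (p + a)) ⊆ K ∧
      Function.support (fun p ↦ G (p - a)) ⊆ K := by
  filter_upwards [eventually_forall_add_mem_sub_mem hGc.isCompact isOpen_interior hGK] with a ha
  refine ⟨fun p hp ↦ ?_, fun p hp ↦ ?_⟩
  · simpa using interior_subset (ha (p + a) (subset_tsupport G hp)).2
  · simpa using interior_subset (ha (p - a) (subset_tsupport G hp)).1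

lemma eventually_support_secondDiff_subset (hGc : HasCompactSupport G)
    (hGK : tsupport G ⊆ interior K) :
    ∀ᶠ a in 𝓝 (0 : V), Function.support (secondDiff G a) ⊆ K := by
  filter_upwards [eventually_support_comp_add_subset hGc hGK] with a ⟨hadd, hsub⟩
  refine Function.support_subset_iff'.2 fun p hp ↦ ?_
  have h0 : G p = 0 := image_eq_zero_of_notMem_tsupport fun h ↦ hp (interior_subset (hGK h))
  simp [secondDiff, h0, Function.support_subset_iff'.1 hadd p hp,
    Function.support_subset_iff'.1 hsub p hp]

lemma support_secondDeriv_subset [NormedSpace ℝ V] (e : V) :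
    Function.support (secondDeriv G e) ⊆ tsupport G :=
  (subset_tsupport _).trans
    ((tsupport_fderiv_apply_subset ℝ e).trans (tsupport_fderiv_apply_subset ℝ e))

end Support

variable {V : Type*} [NormedAddCommGroup V] [NormedSpace ℝ V] [MeasurableSpace V] [BorelSpace V]
  {μ : Measure V} [IsFiniteMeasureOnCompacts μ] {K : Set V} {F f G : V → ℝ}

lemma tendsto_inv_sq_mul_integral_secondDiff (hK : IsCompact K) (hF : ContinuousOn F K)
    (hG : ContDiff ℝ 2 G) (hGc : HasCompactSupport G) (hGK : tsupport G ⊆ interior K) (e : V) :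
    Tendsto (fun h : ℝ ↦ (h ^ 2)⁻¹ * ∫ p, F p * secondDiff G (h • e) p ∂μ) (𝓝[>] 0)
      (𝓝 (∫ p, F p * secondDeriv G e p ∂μ)) := by
  have hcont (h : ℝ) : Continuous fun p ↦ (h ^ 2)⁻¹ * secondDiff G (h • e) p := by
    have := hG.continuous
    unfold secondDiff
    fun_prop
  have hsupp : ∀ᶠ h in 𝓝[>] (0 : ℝ),
      Function.support (fun p ↦ (h ^ 2)⁻¹ * secondDiff G (h • e) p) ⊆ K :=
    ((tendsto_smul_nhdsGT_zero e).eventually (eventually_support_secondDiff_subset hGc hGK)).mono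
      fun h hh ↦ (Function.support_mul_subset_right _ _).trans hh
  simp_rw [← integral_const_mul, mul_left_comm]
  exact tendsto_integral_mul_of_tendstoUniformlyOn hK hF hcont hsupp
    (continuous_iff_continuousAt.2 fun p ↦ continuousAt_secondDeriv hG.contDiffAt e)
    ((support_secondDeriv_subset e).trans (hGK.trans interior_subset))
    (tendstoUniformlyOn_inv_sq_mul_secondDiff hK (fun p _ ↦ hG.contDiffAt) e)

section Laplacian

variable [μ.IsAddRightInvariant] {ι : Type*} [Fintype ι] {b : ι → V} (hK : IsCompact K)
  (hF : ContinuousOn F K) (hf : ContinuousOn f K) (hG0 : ∀ p, 0 ≤ G p)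
  (hGc : HasCompactSupport G) (hGK : tsupport G ⊆ interior K)

include hK hF hf hG0 hGc hGK

lemma eventually_integral_mul_le_sum (hG : Continuous G)
    (hfF : ∀ᶠ h in 𝓝[>] (0 : ℝ), ∀ p ∈ K, h ^ 2 * f p ≤ ∑ o, secondDiff F (h • b o) p) :
    ∀ᶠ h in 𝓝[>] (0 : ℝ), ∫ p, f p * G p ∂μ ≤
      ∑ o, (h ^ 2)⁻¹ * ∫ p, F p * secondDiff G (h • b o) p ∂μ := by
  have hG_supp : Function.support G ⊆ K := (subset_tsupport G).trans (hGK.trans interior_subset)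
  have integrable_mul {F' g : V → ℝ} (hF' : ContinuousOn F' K) (hg : Continuous g)
      (hgK : Function.support g ⊆ K) : Integrable (fun p ↦ F' p * g p) μ :=
    integrable_mul_of_support_subset hK hF' hg hgK
  have hshift (o : ι) := (tendsto_smul_nhdsGT_zero (b o)).eventually
    (eventually_support_comp_add_subset hGc hGK)
  filter_upwards [self_mem_nhdsWithin, hfF, eventually_all.2 hshift] with h (hh : 0 < h) hfF hsupp
  have h0 := integrable_mul hF hG hG_supp
  have hadd (o : ι) := integrable_mul hF (hG.comp (by fun_prop)) (hsupp o).1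
  have hsub (o : ι) := integrable_mul hF (hG.comp (by fun_prop)) (hsupp o).2
  have hint (o : ι) := integrable_secondDiff_mul h0 (hadd o) (hsub o)
  calc ∫ p, f p * G p ∂μ
      ≤ ∫ p, (h ^ 2)⁻¹ * ∑ o, secondDiff F (h • b o) p * G p ∂μ := by
        refine integral_mono (integrable_mul hf hG hG_supp)
          ((integrable_finsetSum _ fun o _ ↦ hint o).const_mul _) fun p ↦ ?_
        rw [← Finset.sum_mul, ← mul_assoc]
        by_cases hp : p ∈ K
        · exact mul_le_mul_of_nonneg_right ((le_inv_mul_iff₀ (by positivity)).2 (hfF p hp)) (hG0 p)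
        · simp [Function.support_subset_iff'.1 hG_supp p hp]
    _ = ∑ o, (h ^ 2)⁻¹ * ∫ p, F p * secondDiff G (h • b o) p ∂μ := by
        rw [integral_const_mul, integral_finsetSum _ fun o _ ↦ hint o, Finset.mul_sum]
        simp only [fun o ↦ integral_secondDiff_mul h0 (hadd o) (hsub o)]

lemma integral_mul_le_integral_mul_sum_secondDeriv (hG : ContDiff ℝ 2 G)
    (hfF : ∀ ε > 0, ∀ᶠ h in 𝓝[>] (0 : ℝ), ∀ p ∈ K,
      h ^ 2 * (f p - ε) ≤ ∑ o, secondDiff F (h • b o) p) :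
    ∫ p, f p * G p ∂μ ≤ ∫ p, F p * ∑ o, secondDeriv G (b o) p ∂μ := by
  have hG_supp : Function.support G ⊆ K := (subset_tsupport G).trans (hGK.trans interior_subset)
  have hlim := tendsto_finsetSum Finset.univ fun o _ ↦
    tendsto_inv_sq_mul_integral_secondDiff (μ := μ) hK hF hG hGc hGK (b o)
  have hsum : ∑ o, ∫ p, F p * secondDeriv G (b o) p ∂μ =
      ∫ p, F p * ∑ o, secondDeriv G (b o) p ∂μ := by
    simp only [Finset.mul_sum]
    refine (integral_finsetSum _ fun o _ ↦ ?_).symm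
    exact integrable_mul_of_support_subset hK hF
      (continuous_iff_continuousAt.2 fun p ↦ continuousAt_secondDeriv hG.contDiffAt (b o))
      ((support_secondDeriv_subset _).trans (hGK.trans interior_subset))
  have hbound (ε : ℝ) (hε : 0 < ε) :
      (∫ p, f p * G p ∂μ) - ε * ∫ p, G p ∂μ ≤ ∫ p, F p * ∑ o, secondDeriv G (b o) p ∂μ := by
    have hsub : ∫ p, (f p - ε) * G p ∂μ = (∫ p, f p * G p ∂μ) - ε * ∫ p, G p ∂μ := by
      simp only [sub_mul]
      rw [integral_sub (integrable_mul_of_support_subset hK hf hG.continuous hG_supp)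
        ((hG.continuous.integrable_of_hasCompactSupport hGc).const_mul ε), integral_const_mul]
    rw [← hsub]
    exact ge_of_tendsto (hsum ▸ hlim) (eventually_integral_mul_le_sum hK hF
      (hf.sub continuousOn_const) hG0 hGc hGK hG.continuous (hfF ε hε))
  have hε_lim : Tendsto (fun ε : ℝ ↦ (∫ p, f p * G p ∂μ) - ε * ∫ p, G p ∂μ) (𝓝[>] 0)
      (𝓝 (∫ p, f p * G p ∂μ)) :=
    (Continuous.tendsto' (by fun_prop) 0 _ (by simp)).mono_left nhdsWithin_le_nhds
  exact le_of_tendsto hε_lim (eventually_mem_nhdsWithin.mono hbound)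

end Laplacian

end WeakLaplacian

section Cylinder

variable {m : ℕ}

lemma IsC2OnClosure.contDiffAt {D : Set (EuclideanSpace ℝ (Fin m))} {ℓ : ℝ} {u : Cyl m → ℝ}
    (hu : IsC2OnClosure u (D ×ˢ Ioo 0 ℓ)) (hℓ : 0 ≠ ℓ) {p : Cyl m} (hp : p ∈ D ×ˢ Icc 0 ℓ) :
    ContDiffAt ℝ 2 u p := by
  obtain ⟨U, hU, hΩU, huU⟩ := hu
  refine huU.contDiffAt (hU.mem_nhds (hΩU ?_))
  rw [closure_prod_eq, closure_Ioo hℓ]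
  exact prod_mono_left subset_closure hp

theorem subharmonicity_cylinder_general {D : Set (EuclideanSpace ℝ (Fin m))} (hD : IsOpen D)
    {ℓ : ℝ} (hℓ : 0 < ℓ) {u : Cyl m → ℝ} (hu : ∀ p ∈ D ×ˢ Icc 0 ℓ, ContDiffAt ℝ 2 u p)
    (huy0 : ∀ x ∈ D, fderiv ℝ u (x, 0) (0, 1) = 0)
    (huyℓ : ∀ x ∈ D, fderiv ℝ u (x, ℓ) (0, 1) = 0) {G : Cyl m → ℝ} (hG : ContDiff ℝ 2 G)
    (hG0 : ∀ p, 0 ≤ G p) (hGc : HasCompactSupport G) (hGΩ : tsupport G ⊆ D ×ˢ Ioo 0 ℓ) :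
    -∫ p in D ×ˢ Ioo 0 ℓ, starFun ℓ u p * cylLap G p ≤
      ∫ p in D ×ˢ Ioo 0 ℓ, starFun ℓ (fun q ↦ -cylLap u q) p * G p := by
  have : (volume : Measure (Cyl m)).IsAddRightInvariant :=
    inferInstanceAs (volume.prod volume).IsAddRightInvariant
  obtain ⟨K, hK, hGK, hKΩ⟩ := exists_compact_between hGc.isCompact (hD.prod isOpen_Ioo) hGΩ
  have hu_cont : ContinuousOn u (D ×ˢ Icc 0 ℓ) := fun p hp ↦
    (hu p hp).continuousAt.continuousWithinAt
  have hweak : ∫ p, -starFun ℓ (fun q ↦ -cylLap u q) p * G p ≤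
      ∫ p, starFun ℓ u p * ∑ o, secondDeriv G (cylBasis o) p :=
    integral_mul_le_integral_mul_sum_secondDeriv hK
      ((continuousOn_starFun hu_cont).mono hKΩ)
      ((continuousOn_starFun (continuousOn_cylLap hu).neg).mono hKΩ).neg hG0 hGc hGK hG
      fun ε hε ↦ eventually_mul_le_sum_secondDiff_starFun hD hℓ hu huy0 huyℓ hK hKΩ hε
  simp only [neg_mul, ← cylLap_eq_sum] at hweak
  rw [integral_neg, neg_le] at hweak
  have hG_Ω (p) (hp : p ∉ D ×ˢ Ioo 0 ℓ) : G p = 0 :=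
    image_eq_zero_of_notMem_tsupport fun h ↦ hp (hGΩ h)
  have hlap_Ω (p) (hp : p ∉ D ×ˢ Ioo 0 ℓ) : cylLap G p = 0 := by
    rw [cylLap_eq_sum]
    exact Finset.sum_eq_zero fun o _ ↦ Function.support_subset_iff'.1
      ((support_secondDeriv_subset (cylBasis o)).trans hGΩ) p hp
  rwa [setIntegral_eq_integral_of_forall_compl_eq_zero fun p hp ↦ by simp [hlap_Ω p hp],
    setIntegral_eq_integral_of_forall_compl_eq_zero fun p hp ↦ by simp [hG_Ω p hp]]

end Cylinder

/-- **Subharmonicity** for the decreasing rearrangement in the `y`-direction: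
if `-Δu = f` and `u_y` vanishes on the top and bottom of the cylinder, then
`-Δ u^★ ≤ f^★` weakly. -/
theorem subharmonicity_cylinder {n : ℕ} (hn : 2 ≤ n)
    (D : Set (EuclideanSpace ℝ (Fin (n - 1)))) (hD : IsOpen D) (hDb : IsBounded D)
    {ℓ : ℝ} (hℓ : 0 < ℓ) (u : Cyl (n - 1) → ℝ)
    (hu : IsC2OnClosure u (D ×ˢ Ioo (0 : ℝ) ℓ))
    (huy0 : ∀ x ∈ D,
      fderiv ℝ u (x, (0 : ℝ)) ((0 : EuclideanSpace ℝ (Fin (n - 1))), (1 : ℝ)) = 0)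
    (huyℓ : ∀ x ∈ D,
      fderiv ℝ u (x, ℓ) ((0 : EuclideanSpace ℝ (Fin (n - 1))), (1 : ℝ)) = 0) :
    ∀ G : Cyl (n - 1) → ℝ, ContDiff ℝ 2 G → (∀ p, 0 ≤ G p) →
      HasCompactSupport G → tsupport G ⊆ D ×ˢ Ioo (0 : ℝ) ℓ →
      -∫ p in D ×ˢ Ioo (0 : ℝ) ℓ, starFun ℓ u p * cylLap G p ≤
        ∫ p in D ×ˢ Ioo (0 : ℝ) ℓ, starFun ℓ (fun q => -cylLap u q) p * G p := by
  intro G hG hG0 hGc hGΩ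
  exact subharmonicity_cylinder_general hD hℓ (fun _ ↦ hu.contDiffAt hℓ.ne) huy0 huyℓ
    hG hG0 hGc hGΩ
end
end
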